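/- arXiv:2309.08093 — 2 statements merged into one kernel-verified Lean document; each statement's English description precedes it below -/
import Mathlib

section
/- (TensorSketch for least squares with proximal term.) Let $P \in \mathbb{R}^{n_1 n_2 \cdots n_q \times s}$ have full column rank with $n_1 n_2 \cdots n_q > s$, let $B \in \mathbb{R}^{n_1 n_2 \cdots n_q \times n}$, $C \in \mathbb{R}^{s \times n}$, $\sigma > 0$, and let $S \in \mathbb{R}^{m \times n_1 n_2 \cdots n_q}$ be a random TensorSketch matrix generated by mutually independent 3-wise independent hash maps and mutually independent 4-wise independent sign functions. Let $X_{opt} = \arg\min_X \frac{1}{2}\|PX - B\|_F^2 + \frac{\sigma}{2}\|X - C\|_F^2$ and $\tilde{X}_{opt} = \arg\min_X \frac{1}{2}\|SPX - SB\|_F^2 + \frac{\sigma}{2}\|X - C\|_F^2$, and set $OPT = \frac{1}{2}\|P X_{opt} - B\|_F^2 + \frac{\sigma}{2}\|X_{opt} - C\|_F^2$. If $m = \max\{8 s^2 (2+3^q)/\delta,\; 8 s (2+3^q)/(\epsilon \delta)\}$, then with probability at least $1 - \delta$, $\frac{1}{2}\|P \tilde{X}_{opt} - B\|_F^2 + \frac{\sigma}{2}\|\tilde{X}_{opt}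 - C\|_F^2 \le (1 + \epsilon) \cdot OPT$. -/
open Matrix MeasureTheory

/-- The CountSketch-type matrix determined by a hash map `h` and a sign vector `v`:
`S j i = v i` if `h i = j` and `0` otherwise. -/
def countSketch {m : ℕ} {ι : Type*} (h : ι → Fin m) (v : ι → ℝ) :
    Matrix (Fin m) ι ℝ :=
  Matrix.of fun j i => if h i = j then v i else 0

/-- The combined TensorSketch hash map of a family of hash maps `h k : [n k] → [m]`:
`h(i₁,…,i_q) = ((∑ k (h_k(i_k) - 1)) mod m) + 1` (in zero-based form, the mod-`m` sum). -/
def hashFam {m : ℕ} [NeZero m] {q : ℕ} {n : Fin q → ℕ} (h : ∀ k, Fin (n k) → Fin m) :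
    (∀ k, Fin (n k)) → Fin m :=
  fun i => ⟨(∑ k, (h k (i k) : ℕ)) % m, Nat.mod_lt _ (Nat.pos_of_ne_zero (NeZero.ne m))⟩

/-- The TensorSketch matrix generated by hash maps `h k` and sign functions `v k`:
the CountSketch-type matrix with hash map `hashFam h` and sign `i ↦ ∏ k, v k (i k)`. -/
def tsMat {m q : ℕ} [NeZero m] {n : Fin q → ℕ}
    (h : ∀ k, Fin (n k) → Fin m) (v : ∀ k, Fin (n k) → ℝ) :
    Matrix (Fin m) (∀ k, Fin (n k)) ℝ :=
  countSketch (hashFam h) (fun i => ∏ k, v k (i k))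

/-- The squared Frobenius norm of a real matrix. -/
def frobSq {α β : Type*} [Fintype α] [Fintype β] (A : Matrix α β ℝ) : ℝ :=
  ∑ i, ∑ j, A i j ^ 2

/-- A random hash map `h : Ω → ι → Fin m` is `k`-wise independent: each value `h(i)` is
uniformly distributed on `[m]`, and any at most `k` values at distinct indices are mutually
independent (their joint distribution factorizes). -/
def KWiseIndepHash {Ω : Type*} [MeasurableSpace Ω] (μ : Measure Ω) (k : ℕ)
    {ι : Type*} {m : ℕ} (h : Ω → ι → Fin m) : Prop :=
  (∀ (i : ι) (j : Fin m), μ {ω | h ω i = j} = 1 / (m : ENNReal)) ∧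
  ∀ t : Finset ι, t.card ≤ k → ∀ j : ι → Fin m,
    μ {ω | ∀ i ∈ t, h ω i = j i} = ∏ i ∈ t, μ {ω | h ω i = j i}

/-- A random sign function `v : Ω → ι → ℝ` is `k`-wise independent: it takes values in
`{-1, 1}`, each value is uniform on `{-1, 1}`, and any at most `k` values at distinct
indices are mutually independent. -/
def KWiseIndepSign {Ω : Type*} [MeasurableSpace Ω] (μ : Measure Ω) (k : ℕ)
    {ι : Type*} (v : Ω → ι → ℝ) : Prop :=
  (∀ ω i, v ω i = 1 ∨ v ω i = -1) ∧
  (∀ (i : ι) (x : ℝ), x = 1 ∨ x = -1 → μ {ω | v ω i = x} = 1 / 2) ∧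
  ∀ t : Finset ι, t.card ≤ k → ∀ x : ι → ℝ,
    μ {ω | ∀ i ∈ t, v ω i = x i} = ∏ i ∈ t, μ {ω | v ω i = x i}

/-- The random hash maps `H k` and random sign functions `V k` are all mutually independent
(as finitely-valued random variables, their joint distribution factorizes). -/
def IndepHashSigns {Ω : Type*} [MeasurableSpace Ω] (μ : Measure Ω)
    {κ : Type*} [Fintype κ] {n : κ → ℕ} {m : ℕ}
    (H : ∀ k, Ω → Fin (n k) → Fin m) (V : ∀ k, Ω → Fin (n k) → ℝ) : Prop :=
  ∀ (g : ∀ k, Fin (n k) → Fin m) (w : ∀ k, Fin (n k) → ℝ),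
    μ {ω | (∀ k, H k ω = g k) ∧ (∀ k, V k ω = w k)} =
      (∏ k, μ {ω | H k ω = g k}) * ∏ k, μ {ω | V k ω = w k}


/-! ### Deterministic linear algebra -/

lemma ts_frobSq_eq_trace {α β : Type*} [Fintype α] [Fintype β] (A : Matrix α β ℝ) :
    frobSq A = (Aᵀ * A).trace := by
  simp only [frobSq, Matrix.trace, Matrix.diag, Matrix.mul_apply, Matrix.transpose_apply]
  rw [Finset.sum_comm]
  simp [sq]

lemma ts_frobSq_nonneg {α β : Type*} [Fintype α] [Fintype β] (A : Matrix α β ℝ) :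
    0 ≤ frobSq A :=
  Finset.sum_nonneg fun _ _ => Finset.sum_nonneg fun _ _ => sq_nonneg _

lemma ts_frobSq_eq_zero {α β : Type*} [Fintype α] [Fintype β] {A : Matrix α β ℝ}
    (h : frobSq A = 0) : A = 0 := by
  ext i j
  have h1 := (Finset.sum_eq_zero_iff_of_nonneg (s := Finset.univ) (f := fun i => ∑ j, A i j ^ 2)
    (fun _ _ => Finset.sum_nonneg fun _ _ => sq_nonneg _)).mp h i (Finset.mem_univ _)
  have h2 := (Finset.sum_eq_zero_iff_of_nonneg (s := Finset.univ) (f := fun j => A i j ^ 2)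
    (fun _ _ => sq_nonneg _)).mp h1 j (Finset.mem_univ _)
  simpa using h2

lemma ts_frobSq_neg {α β : Type*} [Fintype α] [Fintype β] (A : Matrix α β ℝ) :
    frobSq (-A) = frobSq A := by
  simp [frobSq]

lemma ts_frobSq_smul {α β : Type*} [Fintype α] [Fintype β] (t : ℝ) (A : Matrix α β ℝ) :
    frobSq (t • A) = t ^ 2 * frobSq A := by
  simp [frobSq, Finset.mul_sum, mul_pow]

lemma ts_frobSq_add {α β : Type*} [Fintype α] [Fintype β] (A B : Matrix α β ℝ) :
    frobSq (A + B) = frobSq A + 2 * (Aᵀ * B).trace + frobSq B := by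
  have h : (Bᵀ * A).trace = (Aᵀ * B).trace := by
    rw [← Matrix.trace_transpose]; simp
  simp only [ts_frobSq_eq_trace, Matrix.transpose_add, Matrix.add_mul, Matrix.mul_add,
    Matrix.trace_add, h]
  ring

lemma ts_frobSq_add_le {α β : Type*} [Fintype α] [Fintype β] (A B : Matrix α β ℝ) :
    frobSq (A + B) ≤ 2 * frobSq A + 2 * frobSq B := by
  simp only [frobSq, Finset.mul_sum, ← Finset.sum_add_distrib]
  refine Finset.sum_le_sum fun i _ => Finset.sum_le_sum fun j _ => ?_
  simp only [Matrix.add_apply]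
  nlinarith [sq_nonneg (A i j - B i j)]

lemma ts_frobSq_mul_le {α β γ : Type*} [Fintype α] [Fintype β] [Fintype γ]
    (A : Matrix α β ℝ) (B : Matrix β γ ℝ) :
    frobSq (A * B) ≤ frobSq A * frobSq B := by
  have h : ∀ i j, (A * B) i j ^ 2 ≤ (∑ k, A i k ^ 2) * (∑ k, B k j ^ 2) := fun i j => by
    rw [Matrix.mul_apply]
    exact Finset.sum_mul_sq_le_sq_mul_sq _ _ _
  calc frobSq (A * B) ≤ ∑ i, ∑ j, (∑ k, A i k ^ 2) * (∑ k, B k j ^ 2) :=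
        Finset.sum_le_sum fun i _ => Finset.sum_le_sum fun j _ => h i j
    _ = frobSq A * frobSq B := by
        unfold frobSq
        rw [Finset.sum_comm (f := fun k j => B k j ^ 2), Finset.sum_mul_sum]

lemma ts_obj_expand {ι : Type*} [Fintype ι] {s nc : ℕ} (K : Matrix ι (Fin s) ℝ)
    (B : Matrix ι (Fin nc) ℝ) (C X Z : Matrix (Fin s) (Fin nc) ℝ) (σ : ℝ) :
    1 / 2 * frobSq (K * (X + Z) - B) + σ / 2 * frobSq (X + Z - C) =
      1 / 2 * frobSq (K * X - B) + σ / 2 * frobSq (X - C)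
      + ((Kᵀ * (K * X - B) + σ • (X - C))ᵀ * Z).trace
      + (1 / 2 * frobSq (K * Z) + σ / 2 * frobSq Z) := by
  have h1 : K * (X + Z) - B = (K * X - B) + K * Z := by rw [Matrix.mul_add]; abel
  have h2 : X + Z - C = (X - C) + Z := by abel
  rw [h1, h2, ts_frobSq_add, ts_frobSq_add (X - C)]
  generalize K * X - B = R
  generalize X - C = D
  rw [Matrix.transpose_add, Matrix.transpose_mul, Matrix.transpose_transpose,
    Matrix.transpose_smul, Matrix.add_mul, Matrix.trace_add, Matrix.smul_mul, Matrix.trace_smul,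
    Matrix.mul_assoc, smul_eq_mul]
  ring

lemma ts_normal_eq {ι : Type*} [Fintype ι] {s nc : ℕ} (K : Matrix ι (Fin s) ℝ)
    (B : Matrix ι (Fin nc) ℝ) (C X : Matrix (Fin s) (Fin nc) ℝ) (σ : ℝ) (hσ : 0 < σ)
    (hX : ∀ Z, 1 / 2 * frobSq (K * X - B) + σ / 2 * frobSq (X - C) ≤
      1 / 2 * frobSq (K * Z - B) + σ / 2 * frobSq (Z - C)) :
    Kᵀ * (K * X - B) + σ • (X - C) = 0 := by
  set G := Kᵀ * (K * X - B) + σ • (X - C) with hG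
  apply ts_frobSq_eq_zero
  have hc0 : 0 ≤ 1 / 2 * frobSq (K * G) + σ / 2 * frobSq G := by
    have := ts_frobSq_nonneg (K * G); have := ts_frobSq_nonneg G; positivity
  have key : ∀ t : ℝ, 0 ≤ -t * frobSq G
      + t ^ 2 * (1 / 2 * frobSq (K * G) + σ / 2 * frobSq G) := by
    intro t
    have h := hX (X + (-t) • G)
    rw [ts_obj_expand, ← hG] at h
    rw [Matrix.mul_smul, Matrix.mul_smul, ts_frobSq_smul, ts_frobSq_smul, Matrix.trace_smul,
      ← ts_frobSq_eq_trace, smul_eq_mul] at h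
    nlinarith
  set c := 1 / 2 * frobSq (K * G) + σ / 2 * frobSq G
  have hg := ts_frobSq_nonneg G
  by_contra hne
  have hpos : 0 < frobSq G := lt_of_le_of_ne hg (Ne.symm hne)
  have h := key (frobSq G / (c + 1) / 2)
  have hc1 : 0 < c + 1 := by linarith
  have h2 : -(frobSq G / (c + 1) / 2) * frobSq G + (frobSq G / (c + 1) / 2) ^ 2 * c
      = -(frobSq G) ^ 2 * (c + 2) / (4 * (c + 1) ^ 2) := by
    field_simp; ring
  rw [h2] at h
  have : 0 < (frobSq G) ^ 2 * (c + 2) / (4 * (c + 1) ^ 2) := by positivity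
  have h3 : -(frobSq G) ^ 2 * (c + 2) / (4 * (c + 1) ^ 2)
    = - ((frobSq G) ^ 2 * (c + 2) / (4 * (c + 1) ^ 2)) := by ring
  linarith

open scoped MatrixOrder Matrix.Norms.L2Operator in
lemma ts_exists_T {ι : Type*} [Fintype ι] {s : ℕ} (P : Matrix ι (Fin s) ℝ) (σ : ℝ)
    (hσ : 0 < σ) : ∃ T T' : Matrix (Fin s) (Fin s) ℝ, T * T' = 1 ∧
      Tᵀ * (Pᵀ * P) * T + σ • (Tᵀ * T) = 1 := by
  have hM : (Pᵀ * P + σ • (1 : Matrix (Fin s) (Fin s) ℝ)).PosDef := by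
    apply Matrix.PosDef.posSemidef_add
    · simpa using Matrix.posSemidef_conjTranspose_mul_self P
    · exact Matrix.PosDef.one.smul hσ
  obtain ⟨R, hR⟩ := CStarAlgebra.nonneg_iff_eq_star_mul_self.mp hM.posSemidef.nonneg
  have hdet : IsUnit R.det := by
    have := hM.isUnit
    rw [hR, Matrix.isUnit_iff_isUnit_det, Matrix.det_mul] at this
    exact isUnit_of_mul_isUnit_right this
  refine ⟨R⁻¹, R, Matrix.nonsing_inv_mul R hdet, ?_⟩
  have : R⁻¹ᵀ * (Pᵀ * P) * R⁻¹ + σ • (R⁻¹ᵀ * R⁻¹)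
      = R⁻¹ᵀ * (Pᵀ * P + σ • (1 : Matrix (Fin s) (Fin s) ℝ)) * R⁻¹ := by
    simp [Matrix.mul_add, Matrix.add_mul]
  rw [this, hR, Matrix.star_eq_conjTranspose, Matrix.conjTranspose_eq_transpose_of_trivial, ← Matrix.mul_assoc,
    ← Matrix.transpose_mul, Matrix.mul_nonsing_inv R hdet, Matrix.transpose_one, Matrix.one_mul,
    Matrix.mul_nonsing_inv R hdet]

lemma ts_frobSq_U {ι : Type*} [Fintype ι] {s : ℕ} (P : Matrix ι (Fin s) ℝ) (σ : ℝ)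
    (hσ : 0 < σ) (T : Matrix (Fin s) (Fin s) ℝ)
    (hT : Tᵀ * (Pᵀ * P) * T + σ • (Tᵀ * T) = 1) : frobSq (P * T) ≤ s := by
  have h := congrArg Matrix.trace hT
  rw [Matrix.trace_add, Matrix.trace_smul, ← ts_frobSq_eq_trace, Matrix.trace_one,
    Fintype.card_fin, smul_eq_mul] at h
  have h2 : frobSq (P * T) = (Tᵀ * (Pᵀ * P) * T).trace := by
    rw [ts_frobSq_eq_trace, Matrix.transpose_mul]; simp only [Matrix.mul_assoc]
  have := ts_frobSq_nonneg T
  nlinarith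

lemma ts_deterministic {ι κ : Type*} [Fintype ι] [Fintype κ] {s nc : ℕ}
    (P : Matrix ι (Fin s) ℝ) (B : Matrix ι (Fin nc) ℝ) (C X Y : Matrix (Fin s) (Fin nc) ℝ)
    (S : Matrix κ ι ℝ) (σ ε : ℝ) (hσ : 0 < σ) (hε : 0 < ε) (T T' : Matrix (Fin s) (Fin s) ℝ)
    (hTT : T * T' = 1) (hT : Tᵀ * (Pᵀ * P) * T + σ • (Tᵀ * T) = 1)
    (hX : ∀ Z, 1 / 2 * frobSq (P * X - B) + σ / 2 * frobSq (X - C) ≤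
      1 / 2 * frobSq (P * Z - B) + σ / 2 * frobSq (Z - C))
    (hY : ∀ Z, 1 / 2 * frobSq (S * P * Y - S * B) + σ / 2 * frobSq (Y - C) ≤
      1 / 2 * frobSq (S * P * Z - S * B) + σ / 2 * frobSq (Z - C))
    (h1 : frobSq ((P * T)ᵀ * (Sᵀ * S) * (P * T) - (P * T)ᵀ * (P * T)) ≤ 1 / 4)
    (h2 : frobSq ((P * T)ᵀ * (Sᵀ * S) * (P * X - B) - (P * T)ᵀ * (P * X - B)) ≤
      ε / 4 * frobSq (P * X - B)) :
    1 / 2 * frobSq (P * Y - B) + σ / 2 * frobSq (Y - C) ≤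
      (1 + ε) * (1 / 2 * frobSq (P * X - B) + σ / 2 * frobSq (X - C)) := by
  have nX := ts_normal_eq P B C X σ hσ hX
  have nY := ts_normal_eq (S * P) (S * B) C Y σ hσ hY
  set D := T' * (Y - X) with hD
  have hYD : Y = X + T * D := by
    rw [hD, ← Matrix.mul_assoc, hTT, Matrix.one_mul]; abel
  clear_value D
  subst hYD
  set r := P * X - B with hr
  set E := (P * T)ᵀ * (Sᵀ * S) * (P * T) - (P * T)ᵀ * (P * T) with hE
  set Q := (P * T)ᵀ * (Sᵀ * S) * r - (P * T)ᵀ * r with hQ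
  have hXC : σ • (X - C) = - (Pᵀ * r) := eq_neg_of_add_eq_zero_right nX
  have e1 : S * P * (X + T * D) - S * B = S * r + S * (P * T) * D := by
    rw [hr]; simp only [Matrix.mul_add, Matrix.mul_sub, Matrix.mul_assoc]; abel
  have e2 : σ • (X + T * D - C) = - (Pᵀ * r) + σ • (T * D) := by
    rw [← hXC, ← smul_add]; congr 1; abel
  rw [e1, e2] at nY
  have e3 : D + E * D = - Q := by
    have h := congrArg (fun M => Tᵀ * M) nY
    simp only [Matrix.mul_zero] at h
    have h5 : D = Tᵀ * (Pᵀ * P) * T * D + σ • (Tᵀ * T) * D := by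
      rw [← Matrix.add_mul, hT, Matrix.one_mul]
    rw [eq_neg_iff_add_eq_zero, ← h]
    conv_lhs => enter [1, 1]; rw [h5]
    rw [hE, hQ]
    simp only [Matrix.mul_add, Matrix.transpose_mul, Matrix.sub_mul, Matrix.mul_assoc,
      Matrix.mul_neg, Matrix.smul_mul, Matrix.mul_smul]
    abel
  have e4 : frobSq D ≤ 4 * frobSq Q := by
    have h5 : D = -Q + -(E * D) := by rw [← e3]; abel
    have h6 : frobSq D ≤ 2 * frobSq Q + 2 * frobSq (E * D) := by
      conv_lhs => rw [h5]
      refine (ts_frobSq_add_le _ _).trans ?_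
      rw [ts_frobSq_neg, ts_frobSq_neg]
    have h7 := ts_frobSq_mul_le E D
    have h8 := ts_frobSq_nonneg D
    nlinarith
  rw [ts_obj_expand, nX]
  have e5 : 1 / 2 * frobSq (P * (T * D)) + σ / 2 * frobSq (T * D) = 1 / 2 * frobSq D := by
    have h := congrArg (fun M => (Dᵀ * M * D).trace) hT
    simp only [Matrix.mul_one] at h
    rw [← ts_frobSq_eq_trace] at h
    rw [← h, Matrix.mul_add, Matrix.add_mul, Matrix.trace_add, ts_frobSq_eq_trace,
      ts_frobSq_eq_trace]
    simp only [Matrix.transpose_mul, Matrix.mul_assoc, Matrix.smul_mul, Matrix.mul_smul,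
      Matrix.trace_smul, smul_eq_mul]
    ring
  rw [e5, Matrix.transpose_zero, Matrix.zero_mul, Matrix.trace_zero]
  have := ts_frobSq_nonneg (X - C)
  have : 0 ≤ ε * (σ / 2 * frobSq (X - C)) := by positivity
  nlinarith

/-! ### The combinatorial kernel bound -/

/-- The pairing kernel of a single coordinate. -/
def tsK {α : Type*} [DecidableEq α] (x y x' y' : α) : ℝ :=
  (if x = y ∧ x' = y' then 1 else 0) + (if x = x' ∧ y = y' then 1 else 0)
    + (if x = y' ∧ y = x' then 1 else 0)

lemma tsK_nonneg {α : Type*} [DecidableEq α] (x y x' y' : α) : 0 ≤ tsK x y x' y' := by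
  unfold tsK; positivity

lemma ts_cs {α : Type*} [Fintype α] (f g : α → ℝ) :
    ∑ x, f x * g x ≤ √(∑ x, f x ^ 2) * √(∑ x, g x ^ 2) :=
  Real.sum_mul_le_sqrt_mul_sqrt _ _ _

lemma ts_pair {α : Type*} [Fintype α] (f g f' g' : α → ℝ)
    (_h1 : ∀ x, 0 ≤ f x) (_h2 : ∀ x, 0 ≤ g x) (h1' : ∀ x, 0 ≤ f' x) (h2' : ∀ x, 0 ≤ g' x) :
    (∑ x, f x * g x) * (∑ x, f' x * g' x) ≤ √(∑ x, f x ^ 2) * √(∑ x, g x ^ 2)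
      * (√(∑ x, f' x ^ 2) * √(∑ x, g' x ^ 2)) := by
  refine mul_le_mul (ts_cs f g) (ts_cs f' g') ?_ (by positivity)
  exact Finset.sum_nonneg fun x _ => mul_nonneg (h1' x) (h2' x)

lemma ts_one_dim {α : Type*} [Fintype α] [DecidableEq α] (f g f' g' : α → ℝ)
    (h1 : ∀ x, 0 ≤ f x) (h2 : ∀ x, 0 ≤ g x) (h1' : ∀ x, 0 ≤ f' x) (h2' : ∀ x, 0 ≤ g' x) :
    ∑ x, ∑ y, ∑ x', ∑ y', tsK x y x' y' * (f x * g y * (f' x' * g' y')) ≤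
      3 * (√(∑ x, f x ^ 2) * √(∑ x, g x ^ 2) * (√(∑ x, f' x ^ 2) * √(∑ x, g' x ^ 2))) := by
  have e : ∑ x, ∑ y, ∑ x', ∑ y', tsK x y x' y' * (f x * g y * (f' x' * g' y'))
      = (∑ x, f x * g x) * (∑ x, f' x * g' x) + (∑ x, f x * f' x) * (∑ x, g x * g' x)
        + (∑ x, f x * g' x) * (∑ x, g x * f' x) := by
    simp only [tsK, add_mul, Finset.sum_add_distrib, ite_and, ite_mul, one_mul, zero_mul]
    congr 1
    · congr 1
      · simp [Finset.sum_mul_sum]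
      · rw [Finset.sum_mul_sum]
        refine Finset.sum_congr rfl fun x _ => Finset.sum_congr rfl fun y _ => ?_
        simp
        ring
    · rw [Finset.sum_mul_sum]
      refine Finset.sum_congr rfl fun x _ => Finset.sum_congr rfl fun y _ => ?_
      rw [Finset.sum_comm]
      simp
      ring
  rw [e]
  have a1 := ts_pair f g f' g' h1 h2 h1' h2'
  have a2 := ts_pair f f' g g' h1 h1' h2 h2'
  have a3 := ts_pair f g' g f' h1 h2' h2 h1'
  linarith

lemma ts_sum_cons {q : ℕ} {n : Fin (q + 1) → ℕ} (F : (∀ k, Fin (n k)) → ℝ) :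
    ∑ i, F i = ∑ x : Fin (n 0), ∑ i : ∀ k : Fin q, Fin (n k.succ), F (Fin.cons x i) := by
  rw [← (Fin.consEquiv (fun k => Fin (n k))).sum_comp, Fintype.sum_prod_type]
  rfl

lemma ts_kernel : ∀ {q : ℕ} {n : Fin q → ℕ} (f g f' g' : (∀ k, Fin (n k)) → ℝ)
    (_ : ∀ x, 0 ≤ f x) (_ : ∀ x, 0 ≤ g x) (_ : ∀ x, 0 ≤ f' x) (_ : ∀ x, 0 ≤ g' x),
    ∑ x, ∑ y, ∑ x', ∑ y', (∏ k, tsK (x k) (y k) (x' k) (y' k)) * (f x * g y * (f' x' * g' y')) ≤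
      3 ^ q * (√(∑ x, f x ^ 2) * √(∑ x, g x ^ 2) * (√(∑ x, f' x ^ 2) * √(∑ x, g' x ^ 2))) := by
  intro q
  induction q with
  | zero =>
    intro n f g f' g' h1 h2 h1' h2'
    simp only [Fintype.sum_unique, Finset.univ_eq_empty, Finset.prod_empty, one_mul, pow_zero,
      Real.sqrt_sq (h1 _), Real.sqrt_sq (h2 _), Real.sqrt_sq (h1' _), Real.sqrt_sq (h2' _), le_refl]
  | succ q ih =>
    intro n f g f' g' h1 h2 h1' h2'
    have slice : ∀ f : (∀ k, Fin (n k)) → ℝ, ∑ x, f x ^ 2 =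
        ∑ a : Fin (n 0), (√(∑ i : ∀ k : Fin q, Fin (n k.succ), f (Fin.cons a i) ^ 2)) ^ 2 := by
      intro f
      rw [ts_sum_cons]
      refine Finset.sum_congr rfl fun a _ => ?_
      rw [Real.sq_sqrt]
      positivity
    have main := ts_one_dim
      (fun a : Fin (n 0) => √(∑ i : ∀ k : Fin q, Fin (n k.succ), f (Fin.cons a i) ^ 2))
      (fun a : Fin (n 0) => √(∑ i : ∀ k : Fin q, Fin (n k.succ), g (Fin.cons a i) ^ 2))
      (fun a : Fin (n 0) => √(∑ i : ∀ k : Fin q, Fin (n k.succ), f' (Fin.cons a i) ^ 2))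
      (fun a : Fin (n 0) => √(∑ i : ∀ k : Fin q, Fin (n k.succ), g' (Fin.cons a i) ^ 2))
      (fun _ => Real.sqrt_nonneg _) (fun _ => Real.sqrt_nonneg _)
      (fun _ => Real.sqrt_nonneg _) (fun _ => Real.sqrt_nonneg _)
    rw [← slice f, ← slice g, ← slice f', ← slice g'] at main
    have step : ∑ x, ∑ y, ∑ x', ∑ y', (∏ k, tsK (x k) (y k) (x' k) (y' k))
          * (f x * g y * (f' x' * g' y'))
        = ∑ a : Fin (n 0), ∑ b : Fin (n 0), ∑ a' : Fin (n 0), ∑ b' : Fin (n 0), tsK a b a' b' *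
          ∑ x : ∀ k : Fin q, Fin (n k.succ), ∑ y : ∀ k : Fin q, Fin (n k.succ),
          ∑ x' : ∀ k : Fin q, Fin (n k.succ), ∑ y' : ∀ k : Fin q, Fin (n k.succ),
          (∏ k, tsK (x k) (y k) (x' k) (y' k)) * (f (Fin.cons a x) * g (Fin.cons b y)
            * (f' (Fin.cons a' x') * g' (Fin.cons b' y'))) := by
      rw [ts_sum_cons]
      refine Finset.sum_congr rfl fun a _ => ?_
      simp only [ts_sum_cons (q := q)]
      rw [Finset.sum_comm]
      refine Finset.sum_congr rfl fun b _ => ?_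
      conv_lhs => enter [2, x]; rw [Finset.sum_comm]
      rw [Finset.sum_comm]
      refine Finset.sum_congr rfl fun a' _ => ?_
      conv_lhs => enter [2, x, 2, y]; rw [Finset.sum_comm]
      conv_lhs => enter [2, x]; rw [Finset.sum_comm]
      rw [Finset.sum_comm]
      refine Finset.sum_congr rfl fun b' _ => ?_
      simp only [Finset.mul_sum]
      refine Finset.sum_congr rfl fun x _ => Finset.sum_congr rfl fun y _ =>
        Finset.sum_congr rfl fun x' _ => Finset.sum_congr rfl fun y' _ => ?_
      rw [Fin.prod_univ_succ]
      simp only [Fin.cons_zero, Fin.cons_succ]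
      ring
    rw [step]
    refine le_trans (b := 3 ^ q * _) ?_ ((mul_le_mul_of_nonneg_left main
      (by positivity : (0 : ℝ) ≤ 3 ^ q)).trans_eq (by ring))
    simp only [Finset.mul_sum]
    refine Finset.sum_le_sum fun a _ => Finset.sum_le_sum fun b _ =>
        Finset.sum_le_sum fun a' _ => Finset.sum_le_sum fun b' _ => ?_
    have := ih (fun i => f (Fin.cons a i)) (fun i => g (Fin.cons b i))
      (fun i => f' (Fin.cons a' i)) (fun i => g' (Fin.cons b' i)) (fun _ => h1 _) (fun _ => h2 _)
      (fun _ => h1' _) (fun _ => h2' _)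
    have h := mul_le_mul_of_nonneg_left this (tsK_nonneg a b a' b')
    simp only [Finset.mul_sum] at h
    refine h.trans_eq ?_
    ring

/-- Second moment of a sketching error from the second moment of its coefficients. -/
lemma ts_second_moment {Tt : Type*} [Fintype Tt] {q : ℕ} {n : Fin q → ℕ} {α β : Type*}
    [Fintype α] [Fintype β] (p : Tt → ℝ) (M : Tt → Matrix (∀ k, Fin (n k)) (∀ k, Fin (n k)) ℝ)
    (c : ℝ) (hc : 0 ≤ c)
    (hM : ∀ i j i' j', |∑ t, p t * (M t i j * M t i' j')| ≤
      c * ∏ k, tsK (i k) (j k) (i' k) (j' k))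
    (A : Matrix (∀ k, Fin (n k)) α ℝ) (B : Matrix (∀ k, Fin (n k)) β ℝ) :
    ∑ t, p t * frobSq (Aᵀ * M t * B) ≤ c * 3 ^ q * (frobSq A * frobSq B) := by
  have hentry : ∀ (a : α) (b : β), ∑ t, p t * (Aᵀ * M t * B) a b ^ 2 ≤
      c * 3 ^ q * ((∑ i, A i a ^ 2) * ∑ j, B j b ^ 2) := by
    intro a b
    have e1 : ∀ t, (Aᵀ * M t * B) a b = ∑ i, ∑ j, M t i j * (A i a * B j b) := by
      intro t
      simp only [Matrix.mul_apply, Matrix.transpose_apply, Finset.sum_mul]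
      rw [Finset.sum_comm]
      refine Finset.sum_congr rfl fun i _ => Finset.sum_congr rfl fun j _ => ?_
      ring
    have e2 : ∑ t, p t * (Aᵀ * M t * B) a b ^ 2 = ∑ i, ∑ j, ∑ i', ∑ j',
        (∑ t, p t * (M t i j * M t i' j')) * (A i a * B j b * (A i' a * B j' b)) := by
      simp only [e1, sq, Finset.sum_mul]
      simp only [Finset.mul_sum]
      rw [Finset.sum_comm]
      refine Finset.sum_congr rfl fun i _ => ?_
      rw [Finset.sum_comm]
      refine Finset.sum_congr rfl fun j _ => ?_
      rw [Finset.sum_comm]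
      refine Finset.sum_congr rfl fun i' _ => ?_
      rw [Finset.sum_comm]
      refine Finset.sum_congr rfl fun j' _ => ?_
      refine Finset.sum_congr rfl fun t _ => ?_
      ring
    have hk := ts_kernel (fun i => |A i a|) (fun i => |B i b|) (fun i => |A i a|)
      (fun i => |B i b|) (fun _ => abs_nonneg _) (fun _ => abs_nonneg _) (fun _ => abs_nonneg _)
      (fun _ => abs_nonneg _)
    simp only [sq_abs] at hk
    have e3 : √(∑ i, A i a ^ 2) * √(∑ i, B i b ^ 2) * (√(∑ i, A i a ^ 2) * √(∑ i, B i b ^ 2))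
        = (∑ i, A i a ^ 2) * ∑ j, B j b ^ 2 := by
      rw [mul_mul_mul_comm, Real.mul_self_sqrt (by positivity), Real.mul_self_sqrt (by positivity)]
    rw [e3] at hk
    rw [e2, mul_assoc]
    refine le_trans ?_ (mul_le_mul_of_nonneg_left hk hc)
    simp only [Finset.mul_sum]
    refine Finset.sum_le_sum fun i _ => Finset.sum_le_sum fun j _ =>
        Finset.sum_le_sum fun i' _ => Finset.sum_le_sum fun j' _ => ?_
    refine (le_abs_self _).trans ?_
    simp only [abs_mul]
    rw [← mul_assoc c]
    exact mul_le_mul_of_nonneg_right (hM i j i' j') (by positivity)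
  calc ∑ t, p t * frobSq (Aᵀ * M t * B)
      = ∑ a, ∑ b, ∑ t, p t * (Aᵀ * M t * B) a b ^ 2 := by
        simp only [frobSq, Finset.mul_sum]
        rw [Finset.sum_comm]
        refine Finset.sum_congr rfl fun i _ => ?_
        rw [Finset.sum_comm]
    _ ≤ ∑ a, ∑ b, c * 3 ^ q * ((∑ i, A i a ^ 2) * ∑ j, B j b ^ 2) :=
        Finset.sum_le_sum fun a _ => Finset.sum_le_sum fun b _ => hentry a b
    _ = c * 3 ^ q * (frobSq A * frobSq B) := by
        unfold frobSq
        rw [Finset.sum_comm (f := fun k j => B k j ^ 2), Finset.sum_comm (f := fun k j => A k j ^ 2),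
          Finset.sum_mul_sum]
        simp only [Finset.mul_sum]

/-! ### Moments of the sketch, for finite weights -/

lemma ts_hash_iff {m : ℕ} [NeZero m] {q : ℕ} {n : Fin q → ℕ} (g : ∀ k, Fin (n k) → Fin m)
    (i j : ∀ k, Fin (n k)) : hashFam g i = hashFam g j ↔
      ∑ k, ((g k (i k) : ℕ) : ZMod m) = ∑ k, ((g k (j k) : ℕ) : ZMod m) := by
  unfold hashFam
  rw [Fin.mk.injEq, ← Nat.cast_sum, ← Nat.cast_sum, ZMod.natCast_eq_natCast_iff, Nat.ModEq]

lemma ts_pairwise {m : ℕ} [NeZero m] {ι : Type*} [Fintype ι] [DecidableEq ι]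
    (p : (ι → Fin m) → ℝ) (x y : ι)
    (h2 : ∀ a b, ∑ g, p g * (if g x = a ∧ g y = b then 1 else 0) = 1 / (m : ℝ) ^ 2)
    (c d : ZMod m) :
    ∑ g, p g * (if ((g x : ℕ) : ZMod m) + c = ((g y : ℕ) : ZMod m) + d then 1 else 0)
      ≤ 1 / (m : ℝ) := by
  have hm : (0 : ℝ) < m := by exact_mod_cast Nat.pos_of_ne_zero (NeZero.ne m)
  have e : ∀ g : ι → Fin m,
      (if ((g x : ℕ) : ZMod m) + c = ((g y : ℕ) : ZMod m) + d then (1 : ℝ) else 0) =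
      ∑ b : Fin m, ∑ a : Fin m, (if ((a : ℕ) : ZMod m) + c = ((b : ℕ) : ZMod m) + d then (1 : ℝ)
        else 0) * (if g x = a ∧ g y = b then 1 else 0) := by
    intro g
    rw [Finset.sum_eq_single (g y), Finset.sum_eq_single (g x)]
    · simp
    · intro a _ ha; simp [Ne.symm ha]
    · simp
    · intro b _ hb; simp [Ne.symm hb]
    · simp
  simp only [e, Finset.mul_sum]
  rw [Finset.sum_comm]
  have hb : ∀ b : Fin m, ∑ g : ι → Fin m, ∑ a : Fin m, p g *
      ((if ((a : ℕ) : ZMod m) + c = ((b : ℕ) : ZMod m) + d then (1 : ℝ)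
        else 0) * (if g x = a ∧ g y = b then 1 else 0)) ≤ 1 / (m : ℝ) ^ 2 := by
    intro b
    rw [Finset.sum_comm]
    have : ∀ a : Fin m, ∑ g : ι → Fin m, p g *
      ((if ((a : ℕ) : ZMod m) + c = ((b : ℕ) : ZMod m) + d then (1 : ℝ)
        else 0) * (if g x = a ∧ g y = b then 1 else 0)) =
        if ((a : ℕ) : ZMod m) + c = ((b : ℕ) : ZMod m) + d then 1 / (m : ℝ) ^ 2 else 0 := by
      intro a
      split_ifs with h
      · simp only [one_mul]
        exact h2 a b
      · simp
    simp only [this]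
    rw [← Finset.sum_filter, Finset.sum_const, nsmul_eq_mul]
    have hcard : (Finset.univ.filter fun a : Fin m =>
        ((a : ℕ) : ZMod m) + c = ((b : ℕ) : ZMod m) + d).card ≤ 1 := by
      rw [Finset.card_le_one]
      intro a ha a' ha'
      simp only [Finset.mem_filter, Finset.mem_univ, true_and] at ha ha'
      have h3 : ((a : ℕ) : ZMod m) = ((a' : ℕ) : ZMod m) := by
        have := ha.trans ha'.symm
        exact add_right_cancel this
      rw [ZMod.natCast_eq_natCast_iff, Nat.ModEq, Nat.mod_eq_of_lt a.2, Nat.mod_eq_of_lt a'.2] at h3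
      exact Fin.ext h3
    have : (((Finset.univ.filter fun a : Fin m =>
        ((a : ℕ) : ZMod m) + c = ((b : ℕ) : ZMod m) + d).card : ℕ) : ℝ) ≤ 1 := by
      exact_mod_cast hcard
    have h0 : (0 : ℝ) ≤ 1 / (m : ℝ) ^ 2 := by positivity
    nlinarith
  refine (Finset.sum_le_sum fun b _ => hb b).trans ?_
  simp only [Finset.sum_const, Finset.card_univ, Fintype.card_fin, nsmul_eq_mul]
  apply le_of_eq
  field_simp

lemma ts_prod_sum {q : ℕ} {κ : Fin q → Type*} [∀ k, Fintype (κ k)] (f : ∀ k, κ k → ℝ) :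
    ∑ g : ∀ k, κ k, ∏ k, f k (g k) = ∏ k, ∑ x, f k x := by
  classical
  rw [Finset.prod_univ_sum, Fintype.piFinset_univ]

lemma ts_collision {q m : ℕ} [NeZero m] {n : Fin q → ℕ} (ph : ∀ k, (Fin (n k) → Fin m) → ℝ)
    (h0 : ∀ k g, 0 ≤ ph k g) (h1 : ∀ k, ∑ g, ph k g = 1)
    (h2 : ∀ k x y, x ≠ y → ∀ a b,
      ∑ g, ph k g * (if g x = a ∧ g y = b then 1 else 0) = 1 / (m : ℝ) ^ 2)
    (i j : ∀ k, Fin (n k)) (hij : i ≠ j) :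
    ∑ g : ∀ k, Fin (n k) → Fin m,
      (∏ k, ph k (g k)) * (if hashFam g i = hashFam g j then 1 else 0) ≤ 1 / (m : ℝ) := by
  obtain ⟨k0, hk0⟩ := Function.ne_iff.mp hij
  cases q with
  | zero => exact k0.elim0
  | succ q =>
  rw [← (Fin.insertNthEquiv (fun k => Fin (n k) → Fin m) k0).sum_comp, Fintype.sum_prod_type,
    Finset.sum_comm]
  have hm : (0 : ℝ) < m := by exact_mod_cast Nat.pos_of_ne_zero (NeZero.ne m)
  have key : ∀ r : ∀ k : Fin q, Fin (n (k0.succAbove k)) → Fin m,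
      ∑ x : Fin (n k0) → Fin m,
        (∏ k, ph k ((Fin.insertNthEquiv (fun k => Fin (n k) → Fin m) k0) (x, r) k)) *
        (if hashFam ((Fin.insertNthEquiv (fun k => Fin (n k) → Fin m) k0) (x, r)) i =
          hashFam ((Fin.insertNthEquiv (fun k => Fin (n k) → Fin m) k0) (x, r)) j then 1 else 0)
      ≤ (∏ k : Fin q, ph (k0.succAbove k) (r k)) * (1 / (m : ℝ)) := by
    intro r
    have := ts_pairwise (ph k0) (i k0) (j k0) (h2 k0 _ _ hk0)
      (∑ k : Fin q, ((r k (i (k0.succAbove k)) : ℕ) : ZMod m))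
      (∑ k : Fin q, ((r k (j (k0.succAbove k)) : ℕ) : ZMod m))
    refine le_trans (le_of_eq ?_) (mul_le_mul_of_nonneg_left this
      (Finset.prod_nonneg fun k _ => h0 _ _))
    rw [Finset.mul_sum]
    refine Finset.sum_congr rfl fun x _ => ?_
    simp only [ts_hash_iff, Fin.prod_univ_succAbove _ k0, Fin.sum_univ_succAbove _ k0,
      Fin.insertNthEquiv_apply, Fin.insertNth_apply_same, Fin.insertNth_apply_succAbove]
    ring
  refine (Finset.sum_le_sum fun r _ => key r).trans ?_
  rw [← Finset.sum_mul, ts_prod_sum (fun k : Fin q => ph (k0.succAbove k))]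
  simp [h1]

/-- Integer units as real signs. -/
def tsSgn (e : ℤˣ) : ℝ := ((e : ℤ) : ℝ)

lemma tsSgn_mul_self (e : ℤˣ) : tsSgn e * tsSgn e = 1 := by
  rcases Int.units_eq_one_or e with rfl | rfl <;> simp [tsSgn]

lemma ts_gram {m : ℕ} {ι : Type*} [Fintype ι] (h : ι → Fin m) (v : ι → ℝ) (i j : ι) :
    ((countSketch h v)ᵀ * countSketch h v) i j = (if h i = h j then 1 else 0) * (v i * v j) := by
  simp only [countSketch, Matrix.mul_apply, Matrix.transpose_apply, Matrix.of_apply]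
  rw [Finset.sum_eq_single (h i)]
  · by_cases hh : h i = h j
    · simp [hh]
    · simp [hh, Ne.symm hh]
  · intro b _ hb; simp [Ne.symm hb]
  · simp

/-- The error of the sketched Gram matrix. -/
def tsErr {m q : ℕ} [NeZero m] {n : Fin q → ℕ} (g : ∀ k, Fin (n k) → Fin m)
    (w : ∀ k, Fin (n k) → ℤˣ) : Matrix (∀ k, Fin (n k)) (∀ k, Fin (n k)) ℝ :=
  (tsMat g (fun k x => tsSgn (w k x)))ᵀ * (tsMat g (fun k x => tsSgn (w k x))) - 1

lemma ts_amm {q m : ℕ} [NeZero m] {n : Fin q → ℕ} (ph : ∀ k, (Fin (n k) → Fin m) → ℝ)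
    (pv : ∀ k, (Fin (n k) → ℤˣ) → ℝ)
    (h0 : ∀ k g, 0 ≤ ph k g) (h1 : ∀ k, ∑ g, ph k g = 1)
    (h2 : ∀ k x y, x ≠ y → ∀ a b,
      ∑ g, ph k g * (if g x = a ∧ g y = b then 1 else 0) = 1 / (m : ℝ) ^ 2)
    (h4 : ∀ k x y x' y', |∑ w, pv k w * (tsSgn (w x) * tsSgn (w y) *
      (tsSgn (w x') * tsSgn (w y')))| ≤ tsK x y x' y')
    {α β : Type*} [Fintype α] [Fintype β]
    (A : Matrix (∀ k, Fin (n k)) α ℝ) (B : Matrix (∀ k, Fin (n k)) β ℝ) :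
    ∑ t : (∀ k, Fin (n k) → Fin m) × (∀ k, Fin (n k) → ℤˣ),
      ((∏ k, ph k (t.1 k)) * ∏ k, pv k (t.2 k)) *
        frobSq (Aᵀ * ((tsMat t.1 (fun k x => tsSgn (t.2 k x)))ᵀ *
          (tsMat t.1 (fun k x => tsSgn (t.2 k x)))) * B - Aᵀ * B) ≤
      1 / (m : ℝ) * 3 ^ q * (frobSq A * frobSq B) := by
  have hK : ∀ i j i' j' : ∀ k, Fin (n k), 0 ≤ ∏ k, tsK (i k) (j k) (i' k) (j' k) :=
    fun i j i' j' => Finset.prod_nonneg fun k _ => tsK_nonneg _ _ _ _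
  have hm : (0 : ℝ) ≤ 1 / (m : ℝ) := by positivity
  have main := ts_second_moment
    (fun t : (∀ k, Fin (n k) → Fin m) × (∀ k, Fin (n k) → ℤˣ) =>
      (∏ k, ph k (t.1 k)) * ∏ k, pv k (t.2 k))
    (fun t => tsErr t.1 t.2) (1 / (m : ℝ)) hm ?_ A B
  · refine le_trans (le_of_eq ?_) main
    refine Finset.sum_congr rfl fun t _ => ?_
    rw [tsErr, Matrix.mul_sub, Matrix.sub_mul, Matrix.mul_one]
  intro i j i' j'
  have ediag : ∀ (t : (∀ k, Fin (n k) → Fin m) × (∀ k, Fin (n k) → ℤˣ)) (i : ∀ k, Fin (n k)),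
      tsErr t.1 t.2 i i = 0 := by
    intro t i
    rw [tsErr, Matrix.sub_apply, tsMat, ts_gram, ← Finset.prod_mul_distrib]
    simp [tsSgn_mul_self]
  have eoff : ∀ (t : (∀ k, Fin (n k) → Fin m) × (∀ k, Fin (n k) → ℤˣ)) (i j : ∀ k, Fin (n k)),
      i ≠ j → tsErr t.1 t.2 i j =
        (if hashFam t.1 i = hashFam t.1 j then 1 else 0) *
          ∏ k, (tsSgn (t.2 k (i k)) * tsSgn (t.2 k (j k))) := by
    intro t i j hij
    rw [tsErr, Matrix.sub_apply, tsMat, ts_gram, ← Finset.prod_mul_distrib, Matrix.one_apply_ne hij,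
      sub_zero]
  by_cases hij : i = j
  · subst hij
    simp only [ediag, zero_mul, mul_zero, Finset.sum_const_zero, abs_zero]
    exact mul_nonneg hm (hK _ _ _ _)
  by_cases hij' : i' = j'
  · subst hij'
    simp only [ediag, mul_zero, Finset.sum_const_zero, abs_zero]
    exact mul_nonneg hm (hK _ _ _ _)
  have e : ∑ t : (∀ k, Fin (n k) → Fin m) × (∀ k, Fin (n k) → ℤˣ),
      ((∏ k, ph k (t.1 k)) * ∏ k, pv k (t.2 k)) *
      (tsErr t.1 t.2 i j *
       tsErr t.1 t.2 i' j') =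
      (∑ g : ∀ k, Fin (n k) → Fin m, (∏ k, ph k (g k)) *
        ((if hashFam g i = hashFam g j then 1 else 0) *
         (if hashFam g i' = hashFam g j' then 1 else 0))) *
      ∏ k, ∑ w : Fin (n k) → ℤˣ, pv k w * (tsSgn (w (i k)) * tsSgn (w (j k)) *
        (tsSgn (w (i' k)) * tsSgn (w (j' k)))) := by
    rw [← ts_prod_sum (fun k (w : Fin (n k) → ℤˣ) => pv k w * (tsSgn (w (i k)) * tsSgn (w (j k)) *
        (tsSgn (w (i' k)) * tsSgn (w (j' k))))), Finset.sum_mul_sum, Fintype.sum_prod_type]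
    refine Finset.sum_congr rfl fun g _ => Finset.sum_congr rfl fun w _ => ?_
    rw [eoff _ _ _ hij, eoff _ _ _ hij']
    simp only [Finset.prod_mul_distrib]
    ring
  rw [e, abs_mul, Finset.abs_prod]
  have hph : ∀ g : ∀ k, Fin (n k) → Fin m, 0 ≤ ∏ k, ph k (g k) :=
    fun g => Finset.prod_nonneg fun k _ => h0 _ _
  refine mul_le_mul ?_ ?_ (Finset.prod_nonneg fun k _ => abs_nonneg _) hm
  · rw [abs_of_nonneg]
    · refine le_trans ?_ (ts_collision ph h0 h1 h2 i j hij)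
      refine Finset.sum_le_sum fun g _ => mul_le_mul_of_nonneg_left ?_ (hph g)
      split_ifs <;> simp
    · refine Finset.sum_nonneg fun g _ => mul_nonneg (hph g) ?_
      split_ifs <;> simp
  · exact Finset.prod_le_prod (fun k _ => abs_nonneg _) fun k _ => h4 k _ _ _ _

/-! ### Fourth moments of 4-wise independent signs -/

lemma tsSgn_eq (e : ℤˣ) : tsSgn e = (if e = 1 then 1 else 0) - (if e = -1 then 1 else 0) := by
  rcases Int.units_eq_one_or e with rfl | rfl
  · simp [tsSgn]
  · simp [tsSgn]

lemma ts_isolated {ι : Type*} [Fintype ι] [DecidableEq ι] (p : (ι → ℤˣ) → ℝ)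
    (hind : ∀ t : Finset ι, t.card ≤ 4 → ∀ z : ι → ℤˣ,
      ∑ w, p w * (if ∀ i ∈ t, w i = z i then 1 else 0) = (1 / 2 : ℝ) ^ t.card)
    (t : Finset ι) (ht : t.card ≤ 3) (x : ι) (hx : x ∉ t) (F : (ι → ℤˣ) → ℝ)
    (hF : ∀ w w' : ι → ℤˣ, (∀ i ∈ t, w i = w' i) → F w = F w') :
    ∑ w, p w * (tsSgn (w x) * F w) = 0 := by
  rw [← Finset.sum_fiberwise Finset.univ (fun w : ι → ℤˣ => fun i : t => w i)]
  refine Finset.sum_eq_zero fun r _ => ?_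
  set z : ι → ℤˣ := fun i => if h : i ∈ t then r ⟨i, h⟩ else 1 with hz
  have hiff : ∀ w : ι → ℤˣ, (fun i : t => w i) = r ↔ ∀ i ∈ t, w i = z i := by
    intro w
    constructor
    · rintro rfl i hi
      simp [hz, hi]
    · intro h
      funext i
      simp [h i i.2, hz]
  have hins : ∀ (e : ℤˣ) (w : ι → ℤˣ), (∀ i ∈ insert x t, w i = Function.update z x e i) ↔
      (w x = e ∧ ∀ i ∈ t, w i = z i) := by
    intro e w
    rw [Finset.forall_mem_insert, Function.update_self]
    refine and_congr_right fun _ => forall₂_congr fun i hi => ?_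
    rw [Function.update_of_ne (fun h : i = x => hx (h ▸ hi))]
  have hval : ∀ e : ℤˣ, ∑ w, p w * (if w x = e ∧ ∀ i ∈ t, w i = z i then 1 else 0)
      = (1 / 2 : ℝ) ^ (t.card + 1) := by
    intro e
    have := hind (insert x t) (by rw [Finset.card_insert_of_notMem hx]; omega)
      (Function.update z x e)
    rw [Finset.card_insert_of_notMem hx] at this
    rw [← this]
    refine Finset.sum_congr rfl fun w _ => ?_
    congr 1
    exact if_congr (hins e w).symm rfl rfl
  rw [Finset.sum_filter]
  have : ∀ w : ι → ℤˣ, (if (fun i : t => w i) = r then p w * (tsSgn (w x) * F w) else 0) =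
      F z * (p w * (if w x = 1 ∧ ∀ i ∈ t, w i = z i then 1 else 0)
        - p w * (if w x = -1 ∧ ∀ i ∈ t, w i = z i then 1 else 0)) := by
    intro w
    by_cases h : ∀ i ∈ t, w i = z i
    · rw [if_pos ((hiff w).mpr h), hF w z h, tsSgn_eq]
      simp only [and_iff_left h]
      ring
    · rw [if_neg (fun h' => h ((hiff w).mp h')), if_neg (fun h' => h h'.2),
        if_neg (fun h' => h h'.2)]
      ring
  simp only [this]
  rw [← Finset.mul_sum, Finset.sum_sub_distrib, hval, hval]
  ring

lemma ts_fourth {ι : Type*} [Fintype ι] [DecidableEq ι] (p : (ι → ℤˣ) → ℝ)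
    (hp : ∀ w, 0 ≤ p w)
    (hind : ∀ t : Finset ι, t.card ≤ 4 → ∀ z : ι → ℤˣ,
      ∑ w, p w * (if ∀ i ∈ t, w i = z i then 1 else 0) = (1 / 2 : ℝ) ^ t.card)
    (x y x' y' : ι) :
    |∑ w, p w * (tsSgn (w x) * tsSgn (w y) * (tsSgn (w x') * tsSgn (w y')))| ≤ tsK x y x' y' := by
  have hiso : ∀ a b c d : ι, a ≠ b → a ≠ c → a ≠ d →
      ∑ w, p w * (tsSgn (w a) * (tsSgn (w b) * tsSgn (w c) * tsSgn (w d))) = 0 := by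
    intro a b c d hb hc hd
    refine ts_isolated p hind {b, c, d} Finset.card_le_three a (by simp [hb, hc, hd]) _ ?_
    intro w w' h
    rw [h b (by simp), h c (by simp), h d (by simp)]
  have hcases : (x = y ∧ x' = y') ∨ (x = x' ∧ y = y') ∨ (x = y' ∧ y = x') ∨
      (x ≠ y ∧ x ≠ x' ∧ x ≠ y') ∨ (y ≠ x ∧ y ≠ x' ∧ y ≠ y') ∨ (x' ≠ x ∧ x' ≠ y ∧ x' ≠ y') ∨
      (y' ≠ x ∧ y' ≠ y ∧ y' ≠ x') := by
    grind
  have hzero : ∑ w, p w * (tsSgn (w x) * tsSgn (w y) * (tsSgn (w x') * tsSgn (w y'))) = 0 →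
      |∑ w, p w * (tsSgn (w x) * tsSgn (w y) * (tsSgn (w x') * tsSgn (w y')))|
        ≤ tsK x y x' y' := by
    intro h
    rw [h, abs_zero]
    exact tsK_nonneg _ _ _ _
  have hone : |∑ w, p w * (tsSgn (w x) * tsSgn (w y) * (tsSgn (w x') * tsSgn (w y')))| ≤ 1 := by
    have hs := hind ∅ (by simp) 1
    simp only [Finset.notMem_empty, false_imp_iff, implies_true, if_true, mul_one,
      Finset.card_empty, pow_zero] at hs
    rw [← hs]
    refine (Finset.abs_sum_le_sum_abs _ _).trans (Finset.sum_le_sum fun w _ => ?_)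
    have hab : ∀ e : ℤˣ, |tsSgn e| = 1 := by
      intro e
      rcases Int.units_eq_one_or e with rfl | rfl <;> simp [tsSgn]
    simp [abs_mul, hab, abs_of_nonneg (hp w)]
  have hind01 : ∀ (q : Prop) [Decidable q], (0 : ℝ) ≤ if q then 1 else 0 := by
    intro q _; positivity
  rcases hcases with h | h | h | h | h | h | h
  · refine hone.trans ?_
    unfold tsK
    rw [if_pos h]
    linarith [hind01 (x = x' ∧ y = y'), hind01 (x = y' ∧ y = x')]
  · refine hone.trans ?_
    unfold tsK
    rw [if_pos h]
    linarith [hind01 (x = y ∧ x' = y'), hind01 (x = y' ∧ y = x')]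
  · refine hone.trans ?_
    unfold tsK
    rw [if_pos h]
    linarith [hind01 (x = y ∧ x' = y'), hind01 (x = x' ∧ y = y')]
  · refine hzero (Eq.trans ?_ (hiso x y x' y' h.1 h.2.1 h.2.2))
    exact Finset.sum_congr rfl fun w _ => by ring
  · refine hzero (Eq.trans ?_ (hiso y x x' y' h.1 h.2.1 h.2.2))
    exact Finset.sum_congr rfl fun w _ => by ring
  · refine hzero (Eq.trans ?_ (hiso x' x y y' h.1 h.2.1 h.2.2))
    exact Finset.sum_congr rfl fun w _ => by ring
  · refine hzero (Eq.trans ?_ (hiso y' x y x' h.1 h.2.1 h.2.2))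
    exact Finset.sum_congr rfl fun w _ => by ring

/-! ### Passing from the measure to finite weights -/

lemma ts_null {Ω : Type*} [MeasurableSpace Ω] (μ : Measure Ω) [IsProbabilityMeasure μ]
    {T : Type*} [Fintype T] [DecidableEq T] (X : Ω → T)
    (hX : ∑ t, μ {ω | X ω = t} ≤ 1) (t : T) : NullMeasurableSet {ω | X ω = t} μ := by
  set A : T → Set Ω := fun t => {ω | X ω = t} with hA
  set U : Set Ω := ⋃ l ∈ Finset.univ.erase t, toMeasurable μ (A l) with hU
  have hUm : MeasurableSet U :=
    Finset.measurableSet_biUnion _ fun l _ => measurableSet_toMeasurable _ _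
  have hsub1 : Uᶜ ⊆ A t := by
    intro ω hω
    by_contra hne
    refine hω (Set.mem_biUnion (x := X ω) ?_ (subset_toMeasurable _ _ rfl))
    have hne' : X ω ≠ t := hne
    simpa using hne'
  have hsub2 : A t ⊆ toMeasurable μ (A t) := subset_toMeasurable _ _
  have hUle : μ U ≤ ∑ l ∈ Finset.univ.erase t, μ (A l) := by
    refine (measure_biUnion_finset_le _ _).trans (le_of_eq ?_)
    exact Finset.sum_congr rfl fun l _ => measure_toMeasurable _
  have hfin : ∑ l ∈ Finset.univ.erase t, μ (A l) ≠ ⊤ :=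
    ENNReal.sum_ne_top.mpr fun l _ => measure_ne_top _ _
  have hle : μ (toMeasurable μ (A t)) ≤ μ Uᶜ := by
    rw [measure_toMeasurable]
    refine ENNReal.le_of_add_le_add_right hfin ?_
    rw [Finset.add_sum_erase _ (fun l => μ (A l)) (Finset.mem_univ t)]
    refine hX.trans ?_
    have h1 : (1 : ENNReal) ≤ μ Uᶜ + μ U := by
      rw [add_comm, measure_add_measure_compl hUm, measure_univ]
    refine h1.trans ?_
    gcongr
  have hae : Uᶜ =ᵐ[μ] toMeasurable μ (A t) :=
    ae_eq_of_subset_of_measure_ge (hsub1.trans hsub2) hle hUm.compl.nullMeasurableSet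
      (measure_ne_top _ _)
  have hae2 : Uᶜ =ᵐ[μ] A t := by
    refine Filter.EventuallyLE.antisymm (LE.le.eventuallyLE hsub1) ?_
    exact (LE.le.eventuallyLE hsub2).trans hae.symm.le
  exact hUm.compl.nullMeasurableSet.congr hae2

lemma ts_null_pi {Ω : Type*} [MeasurableSpace Ω] (μ : Measure Ω)
    {ι T : Type*} [Countable ι] (X : Ω → ι → T)
    (hX : ∀ i t, NullMeasurableSet {ω | X ω i = t} μ) (g : ι → T) :
    NullMeasurableSet {ω | X ω = g} μ := by
  have : {ω | X ω = g} = ⋂ i, {ω | X ω i = g i} := by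
    ext ω; simp [funext_iff]
  rw [this]
  exact NullMeasurableSet.iInter fun i => hX i _

lemma ts_marg {Ω : Type*} [MeasurableSpace Ω] (μ : Measure Ω) [IsProbabilityMeasure μ]
    {T : Type*} [Fintype T] (X : Ω → T)
    (hX : ∀ t, NullMeasurableSet {ω | X ω = t} μ) (G : T → Prop) [DecidablePred G] :
    ∑ t, (μ {ω | X ω = t}).toReal * (if G t then 1 else 0) = (μ {ω | G (X ω)}).toReal := by
  have e : {ω | G (X ω)} = ⋃ t ∈ Finset.univ.filter G, {ω | X ω = t} := by
    ext ω; simp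
  rw [e, measure_biUnion_finset₀, ENNReal.toReal_sum fun _ _ => measure_ne_top _ _,
    Finset.sum_filter]
  · exact Finset.sum_congr rfl fun t _ => by split_ifs <;> simp
  · intro a _ b _ hab
    refine Disjoint.aedisjoint ?_
    rw [Set.disjoint_left]
    rintro ω rfl h
    exact hab h
  · exact fun t _ => hX t

lemma ts_hash_null {Ω : Type*} [MeasurableSpace Ω] (μ : Measure Ω) [IsProbabilityMeasure μ]
    {m N : ℕ} [NeZero m] (h : Ω → Fin N → Fin m) {k : ℕ} (hh : KWiseIndepHash μ k h)
    (g : Fin N → Fin m) : NullMeasurableSet {ω | h ω = g} μ := by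
  refine ts_null_pi μ h (fun i t => ts_null μ (fun ω => h ω i) ?_ t) g
  simp only [hh.1]
  rw [Finset.sum_const, Finset.card_univ, Fintype.card_fin, nsmul_eq_mul, mul_one_div,
    ENNReal.div_self (by exact_mod_cast NeZero.ne m) (ENNReal.natCast_ne_top m)]

lemma ts_hash_pair {Ω : Type*} [MeasurableSpace Ω] (μ : Measure Ω) [IsProbabilityMeasure μ]
    {m N : ℕ} [NeZero m] (h : Ω → Fin N → Fin m) (hh : KWiseIndepHash μ 3 h)
    (x y : Fin N) (hxy : x ≠ y) (a b : Fin m) :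
    ∑ g, (μ {ω | h ω = g}).toReal * (if g x = a ∧ g y = b then 1 else 0) = 1 / (m : ℝ) ^ 2 := by
  rw [ts_marg μ h (ts_hash_null μ h hh) (fun g => g x = a ∧ g y = b)]
  have := hh.2 {x, y} (Finset.card_le_two.trans (by norm_num)) (fun i => if i = x then a else b)
  rw [Finset.prod_pair hxy, hh.1, hh.1] at this
  have e : {ω | h ω x = a ∧ h ω y = b} =
      {ω | ∀ i ∈ ({x, y} : Finset (Fin N)), h ω i = if i = x then a else b} := by
    ext ω
    simp [hxy.symm]
  rw [e, this]
  simp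
  ring

lemma ts_sign_ind {Ω : Type*} [MeasurableSpace Ω] (μ : Measure Ω) [IsProbabilityMeasure μ]
    {N : ℕ} (v : Ω → Fin N → ℝ) (hv : KWiseIndepSign μ 4 v) (W : Ω → Fin N → ℤˣ)
    (hW : ∀ ω i, v ω i = tsSgn (W ω i))
    (t : Finset (Fin N)) (ht : t.card ≤ 4) (z : Fin N → ℤˣ) :
    ∑ w, (μ {ω | W ω = w}).toReal * (if ∀ i ∈ t, w i = z i then 1 else 0)
      = (1 / 2 : ℝ) ^ t.card := by
  have hinj : ∀ e e' : ℤˣ, tsSgn e = tsSgn e' ↔ e = e' := by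
    intro e e'
    unfold tsSgn
    rw [Int.cast_inj, Units.val_inj]
  have hone : ∀ e : ℤˣ, tsSgn e = 1 ∨ tsSgn e = -1 := by
    intro e
    rcases Int.units_eq_one_or e with rfl | rfl <;> simp [tsSgn]
  have hset : ∀ i (e : ℤˣ), {ω | W ω i = e} = {ω | v ω i = tsSgn e} := by
    intro i e
    ext ω
    simp [hW, hinj]
  have hhalf : ∀ i (e : ℤˣ), μ {ω | W ω i = e} = 1 / 2 := by
    intro i e
    rw [hset]
    exact hv.2.1 i _ (hone e)
  have hnull : ∀ w, NullMeasurableSet {ω | W ω = w} μ := by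
    intro w
    refine ts_null_pi μ W (fun i e => ts_null μ (fun ω => W ω i) ?_ e) w
    simp only [hhalf]
    rw [Finset.sum_const, Finset.card_univ, Fintype.card_units_int, nsmul_eq_mul]
    simp [ENNReal.mul_inv_cancel]
  rw [ts_marg μ W hnull (fun w => ∀ i ∈ t, w i = z i)]
  have := hv.2.2 t ht (fun i => tsSgn (z i))
  have e : {ω | ∀ i ∈ t, W ω i = z i} = {ω | ∀ i ∈ t, v ω i = tsSgn (z i)} := by
    ext ω
    simp [hW, hinj]
  rw [e, this]
  simp only [← hset, hhalf]
  simp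

/-- Theorem 4.4, TensorSketch for least squares with proximal term: let
`P ∈ ℝ^{n₁⋯n_q × s}` have full column rank with `n₁⋯n_q > s`, `B ∈ ℝ^{n₁⋯n_q × n}`,
`C ∈ ℝ^{s × n}`, `σ > 0`, and let `S` be a random TensorSketch matrix generated by mutually
independent 3-wise independent hash maps and mutually independent 4-wise independent sign
functions.  Let `X_opt` minimize `½‖PX-B‖_F² + (σ/2)‖X-C‖_F²` and `X̃_opt` minimize
`½‖SPX-SB‖_F² + (σ/2)‖X-C‖_F²`.  If `m = max{8s²(2+3^q)/δ, 8s(2+3^q)/(εδ)}` then with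
probability at least `1 - δ`,
`½‖P X̃_opt - B‖_F² + (σ/2)‖X̃_opt - C‖_F² ≤ (1+ε)·OPT`. -/
theorem tensorSketch_least_squares_proximal
    {Ω : Type*} [MeasurableSpace Ω] (μ : Measure Ω) [IsProbabilityMeasure μ]
    {q m : ℕ} [NeZero m] {n : Fin q → ℕ} {s nc : ℕ}
    (H : ∀ k, Ω → Fin (n k) → Fin m) (V : ∀ k, Ω → Fin (n k) → ℝ)
    (h3 : ∀ k, KWiseIndepHash μ 3 (H k))
    (h4 : ∀ k, KWiseIndepSign μ 4 (V k))
    (hmut : IndepHashSigns μ H V)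
    (P : Matrix (∀ k, Fin (n k)) (Fin s) ℝ)
    (hrank : P.rank = s) (hcard : s < ∏ k, n k)
    (B : Matrix (∀ k, Fin (n k)) (Fin nc) ℝ) (C : Matrix (Fin s) (Fin nc) ℝ)
    (σ : ℝ) (hσ : 0 < σ)
    (Xopt : Matrix (Fin s) (Fin nc) ℝ)
    (hXopt : ∀ X, 1 / 2 * frobSq (P * Xopt - B) + σ / 2 * frobSq (Xopt - C) ≤
      1 / 2 * frobSq (P * X - B) + σ / 2 * frobSq (X - C))
    (ε δ : ℝ) (hε : 0 < ε) (hδ : 0 < δ)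
    (hm : (m : ℝ) = max (8 * (s : ℝ) ^ 2 * (2 + 3 ^ q) / δ)
      (8 * (s : ℝ) * (2 + 3 ^ q) / (ε * δ))) :
    1 - δ ≤ (μ {ω |
      let S := tsMat (fun k => H k ω) (fun k => V k ω)
      ∀ Y : Matrix (Fin s) (Fin nc) ℝ,
        (∀ X, 1 / 2 * frobSq (S * P * Y - S * B) + σ / 2 * frobSq (Y - C) ≤
            1 / 2 * frobSq (S * P * X - S * B) + σ / 2 * frobSq (X - C)) →
          1 / 2 * frobSq (P * Y - B) + σ / 2 * frobSq (Y - C) ≤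
            (1 + ε) * (1 / 2 * frobSq (P * Xopt - B) + σ / 2 * frobSq (Xopt - C))}).toReal := by
  classical
  obtain ⟨T, T', hTT, hT⟩ := ts_exists_T P σ hσ
  have hU := ts_frobSq_U P σ hσ T hT
  have hU0 := ts_frobSq_nonneg (P * T)
  set W : ∀ k, Ω → Fin (n k) → ℤˣ := fun k ω i => if V k ω i = 1 then 1 else -1 with hWdef
  have hW : ∀ k ω i, V k ω i = tsSgn (W k ω i) := by
    intro k ω i
    rcases (h4 k).1 ω i with h | h
    · simp [hWdef, h, tsSgn]
    · have : (-1 : ℝ) ≠ 1 := by norm_num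
      simp [hWdef, h, this, tsSgn]
  have hinj : ∀ e e' : ℤˣ, tsSgn e = tsSgn e' ↔ e = e' := by
    intro e e'
    unfold tsSgn
    rw [Int.cast_inj, Units.val_inj]
  have hVW : ∀ k ω (w : Fin (n k) → ℤˣ), V k ω = (fun i => tsSgn (w i)) ↔ W k ω = w := by
    intro k ω w
    simp only [funext_iff, hW, hinj]
  clear_value W
  set ph : ∀ k, (Fin (n k) → Fin m) → ℝ := fun k g => (μ {ω | H k ω = g}).toReal with hph
  set pv : ∀ k, (Fin (n k) → ℤˣ) → ℝ := fun k w => (μ {ω | W k ω = w}).toReal with hpv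
  have a0 : ∀ k g, 0 ≤ ph k g := fun k g => ENNReal.toReal_nonneg
  have b0 : ∀ k w, 0 ≤ pv k w := fun k w => ENNReal.toReal_nonneg
  have a1 : ∀ k, ∑ g, ph k g = 1 := by
    intro k
    have := ts_marg μ (H k) (ts_hash_null μ (H k) (h3 k)) (fun _ => True)
    simpa using this
  have a2 := fun k x y hxy a b => ts_hash_pair μ (H k) (h3 k) x y hxy a b
  have b4 := fun k => ts_fourth (pv k) (b0 k) (fun t ht z => by
    convert ts_sign_ind μ (V k) (h4 k) (W k) (hW k) t ht z)
  set r := P * Xopt - B with hr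
  have amm1 := ts_amm ph pv a0 a1 a2 b4 (P * T) (P * T)
  have amm2 := ts_amm ph pv a0 a1 a2 b4 (P * T) r
  set p : (∀ k, Fin (n k) → Fin m) × (∀ k, Fin (n k) → ℤˣ) → ℝ :=
    fun t => (∏ k, ph k (t.1 k)) * ∏ k, pv k (t.2 k) with hp
  set D1 : (∀ k, Fin (n k) → Fin m) × (∀ k, Fin (n k) → ℤˣ) → ℝ := fun t =>
    frobSq ((P * T)ᵀ * ((tsMat t.1 (fun k x => tsSgn (t.2 k x)))ᵀ *
          (tsMat t.1 (fun k x => tsSgn (t.2 k x)))) * (P * T) - (P * T)ᵀ * (P * T)) with hD1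
  set D2 : (∀ k, Fin (n k) → Fin m) × (∀ k, Fin (n k) → ℤˣ) → ℝ := fun t =>
    frobSq ((P * T)ᵀ * ((tsMat t.1 (fun k x => tsSgn (t.2 k x)))ᵀ *
          (tsMat t.1 (fun k x => tsSgn (t.2 k x)))) * r - (P * T)ᵀ * r) with hD2
  change ∑ t, p t * D1 t ≤ _ at amm1
  change ∑ t, p t * D2 t ≤ _ at amm2
  have p0 : ∀ t, 0 ≤ p t := fun t => mul_nonneg (Finset.prod_nonneg fun k _ => a0 _ _)
    (Finset.prod_nonneg fun k _ => b0 _ _)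
  have d1 : ∀ t, 0 ≤ D1 t := fun t => ts_frobSq_nonneg _
  have d2 : ∀ t, 0 ≤ D2 t := fun t => ts_frobSq_nonneg _
  have hr0 := ts_frobSq_nonneg r
  have hpt : ∀ t, (μ {ω | (∀ k, H k ω = t.1 k) ∧ ∀ k, W k ω = t.2 k}).toReal = p t := by
    intro t
    have := hmut t.1 (fun k i => tsSgn (t.2 k i))
    simp only [hVW] at this
    rw [this, ENNReal.toReal_mul, ENNReal.toReal_prod, ENNReal.toReal_prod]
  set bad : (∀ k, Fin (n k) → Fin m) × (∀ k, Fin (n k) → ℤˣ) → Prop :=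
    fun t => 1 / 4 < D1 t ∨ ε / 4 * frobSq r < D2 t with hbad
  have hmarkov : ∑ t ∈ Finset.univ.filter bad, p t ≤ δ := by
    have hpt1 : ∀ t, (if bad t then p t else 0) ≤
        4 * (p t * D1 t) + 4 / (ε * frobSq r) * (p t * D2 t) := by
      intro t
      have n1 : 0 ≤ 4 * (p t * D1 t) := by
        have := p0 t; have := d1 t; positivity
      have n2 : 0 ≤ 4 / (ε * frobSq r) * (p t * D2 t) := by
        have := p0 t; have := d2 t; positivity
      split_ifs with hb
      · rcases hb with hb | hb
        · have := mul_le_mul_of_nonneg_left hb.le (p0 t)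
          linarith
        · have hrpos : 0 < frobSq r := by
            refine lt_of_le_of_ne hr0 fun h => ?_
            have hz := ts_frobSq_eq_zero h.symm
            have : D2 t = 0 := by
              simp only [hD2, hz, Matrix.mul_zero, sub_zero]
              simp [frobSq]
            rw [this, ← h] at hb
            simp at hb
          have h5 : p t ≤ 4 / (ε * frobSq r) * (p t * D2 t) := by
            rw [div_mul_eq_mul_div, le_div_iff₀ (by positivity)]
            have := mul_le_mul_of_nonneg_left hb.le (p0 t)
            linarith
          linarith
      · linarith
    have hmpos : (0 : ℝ) < m := by exact_mod_cast Nat.pos_of_ne_zero (NeZero.ne m)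
    have m1 : 8 * (s : ℝ) ^ 2 * (2 + 3 ^ q) / δ ≤ m := hm ▸ le_max_left _ _
    have m2 : 8 * (s : ℝ) * (2 + 3 ^ q) / (ε * δ) ≤ m := hm ▸ le_max_right _ _
    rw [div_le_iff₀ (by positivity)] at m1 m2
    have hs0 : (0 : ℝ) ≤ s := Nat.cast_nonneg s
    have h3q : (0 : ℝ) < 3 ^ q := by positivity
    have hhalf1 : 4 * ∑ t, p t * D1 t ≤ δ / 2 := by
      have e1 : frobSq (P * T) * frobSq (P * T) ≤ (s : ℝ) ^ 2 := by nlinarith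
      have e2 : 1 / (m : ℝ) * 3 ^ q * (frobSq (P * T) * frobSq (P * T)) ≤
          1 / (m : ℝ) * 3 ^ q * (s : ℝ) ^ 2 := by gcongr
      have e3 : 1 / (m : ℝ) * 3 ^ q * (s : ℝ) ^ 2 ≤ δ / 8 := by
        rw [mul_assoc, one_div_mul_eq_div, div_le_iff₀ hmpos]
        nlinarith [sq_nonneg (s : ℝ)]
      linarith
    have hhalf2 : 4 / (ε * frobSq r) * ∑ t, p t * D2 t ≤ δ / 2 := by
      rcases hr0.eq_or_lt with h | hrpos
      · rw [← h]; simp; positivity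
      · have e2 : 1 / (m : ℝ) * 3 ^ q * (frobSq (P * T) * frobSq r) ≤
          1 / (m : ℝ) * 3 ^ q * (s * frobSq r) := by gcongr
        have e3 : 1 / (m : ℝ) * 3 ^ q * s ≤ ε * δ / 8 := by
          rw [mul_assoc, one_div_mul_eq_div, div_le_iff₀ hmpos]
          nlinarith
        rw [div_mul_eq_mul_div, div_le_iff₀ (by positivity)]
        have e4 : 1 / (m : ℝ) * 3 ^ q * (s * frobSq r) ≤ ε * δ / 8 * frobSq r := by
          rw [← mul_assoc]; gcongr
        linarith
    rw [Finset.sum_filter]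
    refine (Finset.sum_le_sum fun t _ => hpt1 t).trans ?_
    rw [Finset.sum_add_distrib, ← Finset.mul_sum, ← Finset.mul_sum]
    linarith
  set good : Set Ω := {ω |
      let S := tsMat (fun k => H k ω) (fun k => V k ω)
      ∀ Y : Matrix (Fin s) (Fin nc) ℝ,
        (∀ X, 1 / 2 * frobSq (S * P * Y - S * B) + σ / 2 * frobSq (Y - C) ≤
            1 / 2 * frobSq (S * P * X - S * B) + σ / 2 * frobSq (X - C)) →
          1 / 2 * frobSq (P * Y - B) + σ / 2 * frobSq (Y - C) ≤
            (1 + ε) * (1 / 2 * frobSq r + σ / 2 * frobSq (Xopt - C))} with hgood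
  have hcover : goodᶜ ⊆ ⋃ t ∈ Finset.univ.filter bad,
      {ω | (∀ k, H k ω = t.1 k) ∧ ∀ k, W k ω = t.2 k} := by
    intro ω hω
    refine Set.mem_biUnion (x := (⟨fun k => H k ω, fun k => W k ω⟩ :
      (∀ k, Fin (n k) → Fin m) × (∀ k, Fin (n k) → ℤˣ))) ?_ ⟨fun _ => rfl, fun _ => rfl⟩
    simp only [Finset.coe_filter, Finset.mem_univ, true_and, Set.mem_ofPred_eq]
    by_contra hnb
    simp only [hbad, not_or, not_lt] at hnb
    refine hω ?_
    simp only [hgood, Set.mem_ofPred_eq]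
    intro Y hY
    have hVe : (fun k => V k ω) = fun k x => tsSgn (W k ω x) := by
      funext k x
      exact hW k ω x
    rw [hVe] at hY
    exact ts_deterministic P B C Xopt Y _ σ ε hσ hε T T' hTT hT hXopt hY hnb.1 hnb.2
  have hbadle : (μ goodᶜ).toReal ≤ δ := by
    refine le_trans ?_ hmarkov
    have h5 : μ goodᶜ ≤ ∑ t ∈ Finset.univ.filter bad,
        μ {ω | (∀ k, H k ω = t.1 k) ∧ ∀ k, W k ω = t.2 k} :=
      (measure_mono hcover).trans (measure_biUnion_finset_le _ _)
    have h6 := ENNReal.toReal_mono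
      (ENNReal.sum_ne_top.mpr fun t _ => measure_ne_top _ _) h5
    rw [ENNReal.toReal_sum fun _ _ => measure_ne_top _ _] at h6
    refine h6.trans (le_of_eq ?_)
    exact Finset.sum_congr rfl fun t _ => hpt t
  have htot : (1 : ℝ) ≤ (μ good).toReal + (μ goodᶜ).toReal := by
    rw [← ENNReal.toReal_add (measure_ne_top _ _) (measure_ne_top _ _)]
    have h7 : (1 : ENNReal) ≤ μ good + μ goodᶜ := by
      rw [← measure_univ (μ := μ), ← Set.union_compl_self good]
      exact measure_union_le _ _
    have := ENNReal.toReal_mono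
      (ENNReal.add_ne_top.mpr ⟨measure_ne_top _ _, measure_ne_top _ _⟩) h7
    simpa using this
  linarith
end

section
/- (Accuracy of the randomized proximal TT-ALS update.) Fix $k \in [d]$, let $H_k = G_{>k}^{\top} \otimes G_{<k} \in \mathbb{R}^{\prod_{i \ne k} n_i \times r_{k-1} r_k}$ have full column rank with $\prod_{i \ne k} n_i > r_{k-1} r_k$, let $\mathcal{A} \in \mathbb{R}^{n_1 \times \cdots \times n_d}$, $\sigma > 0$, and set $s = r_{k-1} r_k$ and $q = d - 1$. Let $S \in \mathbb{R}^{m \times \prod_{i\ne k} n_i}$ be a random TensorSketch matrix generated by mutually independent 3-wise independent hash maps and mutually independent 4-wise independent sign functions. If $m = \max\{8 s^2 (2+3^q)/\delta,\; 8 s (2+3^q)/(\epsilon \delta)\}$, then with probability at least $1 - \delta$, the unique minimizer $\mathcal{G}_k^{(t+1)}$ of the sketched proximal subproblem $\min_{\mathcal{G}_k} \frac{1}{2}\|S H_k \mathcal{G}_{k(2)}^{\top} - S \mathcal{A}_{(k)}^{\top}\|_F^2 + \frac{\sigma}{2}\|\mathcal{G}_k - \mathcal{G}_k^{(t)}\|_F^2$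 satisfies $\frac{1}{2}\|H_k (\mathcal{G}^{(t+1)}_{k(2)})^{\top} - \mathcal{A}_{(k)}^{\top}\|_F^2 + \frac{\sigma}{2}\|\mathcal{G}_k^{(t+1)} - \mathcal{G}_k^{(t)}\|_F^2 \le (1+\epsilon) \cdot OPT$, where $OPT$ is the optimal value of $\min_{\mathcal{G}_k} \frac{1}{2}\|H_k \mathcal{G}_{k(2)}^{\top} - \mathcal{A}_{(k)}^{\top}\|_F^2 + \frac{\sigma}{2}\|\mathcal{G}_k - \mathcal{G}_k^{(t)}\|_F^2$. -/
open Matrix MeasureTheory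

/-- The combined TensorSketch hash map of two hash maps (mod-`m` sum). -/
def hashPair {m : ℕ} [NeZero m] {ι₁ ι₂ : Type*} (h₁ : ι₁ → Fin m) (h₂ : ι₂ → Fin m) :
    ι₁ × ι₂ → Fin m :=
  fun i => ⟨((h₁ i.1 : ℕ) + (h₂ i.2 : ℕ)) % m, Nat.mod_lt _ (Nat.pos_of_ne_zero (NeZero.ne m))⟩

/-- The chain product of TT-core slices:
`ttChain r n G p i = G 0 (i 0) * G 1 (i 1) * ⋯ * G (p-1) (i (p-1))`. -/
def ttChain (r n : ℕ → ℕ) {α : Type*} [Semiring α]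
    (G : (j : ℕ) → Fin (n j) → Matrix (Fin (r j)) (Fin (r (j + 1))) α) :
    (p : ℕ) → ((j : Fin p) → Fin (n j)) → Matrix (Fin (r 0)) (Fin (r p)) α
  | 0, _ => 1
  | p + 1, i => ttChain r n G p (fun j => i j.castSucc) * G p (i (Fin.last p))


/-- kernel bound -/
def KerBd {I : Type*} [Fintype I] (K : I → I → I → I → ℝ) (C : ℝ) : Prop :=
  ∀ f g F G : I → ℝ, (∀ i, 0 ≤ f i) → (∀ i, 0 ≤ g i) → (∀ i, 0 ≤ F i) → (∀ i, 0 ≤ G i) →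
    ∑ i, ∑ j, ∑ k, ∑ l, f i * g j * F k * G l * K i j k l ≤
      C * (√(∑ i, f i ^ 2) * √(∑ i, g i ^ 2) * √(∑ i, F i ^ 2) * √(∑ i, G i ^ 2))

def pairKer {I : Type*} [DecidableEq I] (a b c d : I) : ℝ :=
  (if a = b ∧ c = d then 1 else 0) + (if a = c ∧ b = d then 1 else 0) +
    (if a = d ∧ b = c then 1 else 0)

lemma pairKer_nonneg {I : Type*} [DecidableEq I] (a b c d : I) : 0 ≤ pairKer a b c d := by
  unfold pairKer; positivity

lemma cs_sqrt {I : Type*} [Fintype I] (f g : I → ℝ) :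
    ∑ i, f i * g i ≤ √(∑ i, f i ^ 2) * √(∑ i, g i ^ 2) :=
  Real.sum_mul_le_sqrt_mul_sqrt _ _ _

lemma kerBd_pair {I : Type*} [Fintype I] [DecidableEq I] : KerBd (pairKer (I := I)) 3 := by
  intro f g F G hf hg hF hG
  have h1 : ∑ i, ∑ j, ∑ k, ∑ l, f i * g j * F k * G l * pairKer i j k l =
      (∑ i, f i * g i) * (∑ i, F i * G i) + (∑ i, f i * F i) * (∑ i, g i * G i)
      + (∑ i, f i * G i) * (∑ i, g i * F i) := by
    simp only [pairKer, mul_add, Finset.sum_add_distrib, ite_and, mul_ite, mul_one, mul_zero]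
    congr 1
    · congr 1
      · simp [Finset.sum_mul_sum, mul_assoc]
      · simp only [Finset.sum_mul_sum]
        refine Finset.sum_congr rfl fun i _ => Finset.sum_congr rfl fun j _ => ?_
        rw [Finset.sum_eq_single i (by intro b _ hb; simp [hb.symm]) (by simp)]
        simp; ring
    · simp only [Finset.sum_mul_sum]
      refine Finset.sum_congr rfl fun i _ => Finset.sum_congr rfl fun j _ => ?_
      rw [Finset.sum_eq_single j (by intro b _ hb; simp [hb.symm]) (by simp)]
      simp; ring
  rw [h1]
  have p : ∀ u v : I → ℝ, (∀ i, 0 ≤ u i) → (∀ i, 0 ≤ v i) → 0 ≤ ∑ i, u i * v i :=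
    fun u v hu hv => Finset.sum_nonneg fun i _ => mul_nonneg (hu i) (hv i)
  have a1 := mul_le_mul (cs_sqrt f g) (cs_sqrt F G) (p _ _ hF hG) (by positivity)
  have a2 := mul_le_mul (cs_sqrt f F) (cs_sqrt g G) (p _ _ hg hG) (by positivity)
  have a3 := mul_le_mul (cs_sqrt f G) (cs_sqrt g F) (p _ _ hg hF) (by positivity)
  linarith

lemma kerBd_one {I : Type*} [Unique I] : KerBd (fun _ _ _ _ : I => (1:ℝ)) 1 := by
  intro f g F G hf hg hF hG
  simp [Real.sqrt_sq, hf, hg, hF, hG]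

lemma kerBd_prod {I J : Type*} [Fintype I] [Fintype J] {K : I → I → I → I → ℝ}
    {L : J → J → J → J → ℝ} {C D : ℝ} (hK0 : ∀ a b c d, 0 ≤ K a b c d) (hD : 0 ≤ D)
    (hK : KerBd K C) (hL : KerBd L D) :
    KerBd (fun a b c d : I × J => K a.1 b.1 c.1 d.1 * L a.2 b.2 c.2 d.2) (C * D) := by
  intro f g F G hf hg hF hG
  have hs : ∀ f : I × J → ℝ, ∑ i, f i ^ 2 = ∑ i, (√(∑ j, f (i, j) ^ 2)) ^ 2 := by
    intro f
    rw [Fintype.sum_prod_type]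
    refine Finset.sum_congr rfl fun i _ => ?_
    rw [Real.sq_sqrt (Finset.sum_nonneg fun j _ => sq_nonneg _)]
  rw [hs f, hs g, hs F, hs G]
  have h2 := hK (fun i => √(∑ j, f (i, j) ^ 2)) (fun i => √(∑ j, g (i, j) ^ 2))
    (fun i => √(∑ j, F (i, j) ^ 2)) (fun i => √(∑ j, G (i, j) ^ 2))
    (fun _ => Real.sqrt_nonneg _) (fun _ => Real.sqrt_nonneg _)
    (fun _ => Real.sqrt_nonneg _) (fun _ => Real.sqrt_nonneg _)
  have h3 : ∑ i, ∑ j, ∑ k, ∑ l, f i * g j * F k * G l *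
        (K i.1 j.1 k.1 l.1 * L i.2 j.2 k.2 l.2) =
      ∑ i, ∑ j, ∑ k, ∑ l, K i j k l * ∑ i', ∑ j', ∑ k', ∑ l',
        f (i, i') * g (j, j') * F (k, k') * G (l, l') * L i' j' k' l' := by
    simp only [Fintype.sum_prod_type, Finset.mul_sum]
    refine Finset.sum_congr rfl fun i _ => ?_
    rw [Finset.sum_comm]
    refine Finset.sum_congr rfl fun j _ => ?_
    simp_rw [Finset.sum_comm (γ := J) (α := I)]
    refine Finset.sum_congr rfl fun k _ => ?_
    refine Finset.sum_congr rfl fun l _ => ?_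
    refine Finset.sum_congr rfl fun i' _ => ?_
    refine Finset.sum_congr rfl fun j' _ => ?_
    refine Finset.sum_congr rfl fun k' _ => ?_
    refine Finset.sum_congr rfl fun l' _ => ?_
    ring
  rw [h3]
  calc _ ≤ ∑ i, ∑ j, ∑ k, ∑ l, K i j k l * (D * (√(∑ j, f (i, j) ^ 2) *
        √(∑ i, g (j, i) ^ 2) * √(∑ j, F (k, j) ^ 2) * √(∑ j, G (l, j) ^ 2))) := by
        refine Finset.sum_le_sum fun i _ => Finset.sum_le_sum fun j _ =>
          Finset.sum_le_sum fun k _ => Finset.sum_le_sum fun l _ => ?_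
        exact mul_le_mul_of_nonneg_left (hL (fun x => f (i, x)) (fun x => g (j, x))
          (fun x => F (k, x)) (fun x => G (l, x)) (fun _ => hf _) (fun _ => hg _)
          (fun _ => hF _) (fun _ => hG _)) (hK0 _ _ _ _)
    _ = D * ∑ i, ∑ j, ∑ k, ∑ l, (√(∑ j, f (i, j) ^ 2) *
        √(∑ i, g (j, i) ^ 2) * √(∑ j, F (k, j) ^ 2) * √(∑ j, G (l, j) ^ 2)) * K i j k l := by
        simp only [Finset.mul_sum]
        refine Finset.sum_congr rfl fun i _ => Finset.sum_congr rfl fun j _ =>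
          Finset.sum_congr rfl fun k _ => Finset.sum_congr rfl fun l _ => ?_
        ring
    _ ≤ _ := by
        refine (mul_le_mul_of_nonneg_left h2 hD).trans (le_of_eq ?_)
        ring

lemma kerBd_equiv {I J : Type*} [Fintype I] [Fintype J] (e : I ≃ J) {K : I → I → I → I → ℝ}
    {L : J → J → J → J → ℝ} {C : ℝ} (hL : KerBd L C)
    (h : ∀ a b c d, K a b c d = L (e a) (e b) (e c) (e d)) : KerBd K C := by
  intro f g F G hf hg hF hG
  have := hL (f ∘ e.symm) (g ∘ e.symm) (F ∘ e.symm) (G ∘ e.symm) (fun _ => hf _) (fun _ => hg _)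
          (fun _ => hF _) (fun _ => hG _)
  simp only [← e.sum_comp, Function.comp_apply, Equiv.symm_apply_apply] at this
  simpa only [h] using this

lemma kerBd_pi_zero (n : Fin 0 → ℕ) :
    KerBd (fun a b c d : (∀ k, Fin (n k)) => ∏ k, pairKer (a k) (b k) (c k) (d k)) 1 := by
  intro f g F G hf hg hF hG
  have e : ∀ (f : (∀ k, Fin (n k)) → ℝ), ∑ i, f i = f default := fun f => Fintype.sum_unique f
  simp only [e, Finset.univ_eq_empty, Finset.prod_empty, mul_one, one_mul]
  rw [Real.sqrt_sq (hf _), Real.sqrt_sq (hg _), Real.sqrt_sq (hF _), Real.sqrt_sq (hG _)]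

lemma kerBd_pi (q : ℕ) : ∀ (n : Fin q → ℕ),
    KerBd (fun a b c d : (∀ k, Fin (n k)) => ∏ k, pairKer (a k) (b k) (c k) (d k)) (3 ^ q) := by
  induction q with
  | zero => intro n; rw [pow_zero]; exact kerBd_pi_zero n
  | succ q ih =>
    intro n
    have h1 := kerBd_prod (pairKer_nonneg (I := Fin (n 0))) (by positivity) kerBd_pair
      (ih (fun k => n k.succ))
    rw [pow_succ']
    refine kerBd_equiv (Fin.consEquiv (fun k => Fin (n k))).symm h1 ?_
    intro a b c d
    rw [Fin.prod_univ_succ]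
    rfl

/-- Frobenius inner product -/
def fip {α β : Type*} [Fintype α] [Fintype β] (A B : Matrix α β ℝ) : ℝ :=
  ∑ i, ∑ j, A i j * B i j

section fip
variable {α β γ : Type*} [Fintype α] [Fintype β] [Fintype γ]

lemma frobSq_eq (A : Matrix α β ℝ) : frobSq A = fip A A := by
  simp [frobSq, fip, sq]

lemma frobSq_nonneg (A : Matrix α β ℝ) : 0 ≤ frobSq A := by
  unfold frobSq; positivity

lemma fip_comm (A B : Matrix α β ℝ) : fip A B = fip B A := by
  simp [fip, mul_comm]

lemma fip_add_left (A B C : Matrix α β ℝ) : fip (A + B) C = fip A C + fip B C := by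
  simp [fip, add_mul, Finset.sum_add_distrib]

lemma fip_sub_left (A B C : Matrix α β ℝ) : fip (A - B) C = fip A C - fip B C := by
  simp [fip, sub_mul, Finset.sum_sub_distrib]

lemma fip_smul_left (t : ℝ) (A C : Matrix α β ℝ) : fip (t • A) C = t * fip A C := by
  simp [fip, Finset.mul_sum, mul_assoc]

lemma fip_add_right (A B C : Matrix α β ℝ) : fip C (A + B) = fip C A + fip C B := by
  simp only [fip_comm C, fip_add_left]

lemma fip_sub_right (A B C : Matrix α β ℝ) : fip C (A - B) = fip C A - fip C B := by
  simp only [fip_comm C, fip_sub_left]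

lemma fip_smul_right (t : ℝ) (A C : Matrix α β ℝ) : fip C (t • A) = t * fip C A := by
  simp only [fip_comm C, fip_smul_left]

lemma fip_mul_left (U : Matrix α β ℝ) (Z : Matrix β γ ℝ) (B : Matrix α γ ℝ) :
    fip (U * Z) B = fip Z (Uᵀ * B) := by
  simp only [fip, Matrix.mul_apply, Finset.sum_mul, Finset.mul_sum, Matrix.transpose_apply]
  simp_rw [Finset.sum_comm (γ := α) (α := γ), Finset.sum_comm (γ := α) (α := β)]
  rw [Finset.sum_comm]
  refine Finset.sum_congr rfl fun i _ => Finset.sum_congr rfl fun j _ =>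
          Finset.sum_congr rfl fun k _ => ?_
  ring

lemma fip_sq_le (A B : Matrix α β ℝ) : fip A B ^ 2 ≤ frobSq A * frobSq B := by
  have := Finset.sum_mul_sq_le_sq_mul_sq Finset.univ (fun x : α × β => A x.1 x.2)
    (fun x : α × β => B x.1 x.2)
  simpa [fip, frobSq, Fintype.sum_prod_type] using this

lemma frobSq_mul_le (M : Matrix α β ℝ) (Z : Matrix β γ ℝ) :
    frobSq (M * Z) ≤ frobSq M * frobSq Z := by
  have h : frobSq Z = ∑ j, ∑ i, Z i j ^ 2 := by rw [frobSq, Finset.sum_comm]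
  rw [h, frobSq, frobSq, Finset.sum_mul_sum]
  refine Finset.sum_le_sum fun i _ => Finset.sum_le_sum fun j _ => ?_
  rw [Matrix.mul_apply]
  exact Finset.sum_mul_sq_le_sq_mul_sq _ _ _
end fip

lemma lin_zero (b c : ℝ) (h : ∀ t : ℝ, 0 ≤ t * b + t ^ 2 * c) : b = 0 := by
  by_contra hb
  have hc : 0 ≤ c := by nlinarith [h 1, h (-1)]
  have hpos : 0 < b ^ 2 := by positivity
  have := h (-b / (c + 1))
  have h2 : -b / (c + 1) * b + (-b / (c + 1)) ^ 2 * c = - b ^ 2 / (c + 1) ^ 2 := by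
    field_simp; ring
  rw [h2, neg_div] at this
  have : 0 < b ^ 2 / (c + 1) ^ 2 := by positivity
  linarith

lemma min_normal {α β γ : Type*} [Fintype α] [Fintype β] [Fintype γ] (H : Matrix α β ℝ)
    (A : Matrix α γ ℝ) (Y Xt D : Matrix β γ ℝ) (σ : ℝ)
    (h : ∀ X, 1 / 2 * frobSq (H * Y - A) + σ / 2 * frobSq (Y - Xt) ≤
      1 / 2 * frobSq (H * X - A) + σ / 2 * frobSq (X - Xt)) :
    fip (H * Y - A) (H * D) + σ * fip (Y - Xt) D = 0 := by
  apply lin_zero _ (1 / 2 * frobSq (H * D) + σ / 2 * frobSq D)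
  intro t
  have h1 := h (Y + t • D)
  have e1 : H * (Y + t • D) - A = (H * Y - A) + t • (H * D) := by
    rw [Matrix.mul_add, Matrix.mul_smul]; abel
  have e2 : Y + t • D - Xt = (Y - Xt) + t • D := by abel
  rw [e1, e2] at h1
  generalize H * Y - A = P at *
  generalize Y - Xt = Q at *
  generalize H * D = R at *
  simp only [frobSq_eq, fip_add_left, fip_add_right, fip_smul_left, fip_smul_right] at h1 ⊢
  rw [fip_comm R P, fip_comm D Q] at h1
  linarith

lemma deterministic {α β γ ρ μ' : Type*} [Fintype α] [Fintype β] [Fintype γ] [Fintype ρ]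
    [Fintype μ'] [DecidableEq ρ]
    (H : Matrix α β ℝ) (U : Matrix α ρ ℝ) (W : Matrix ρ β ℝ) (hU : Uᵀ * U = 1) (hH : H = U * W)
    (A : Matrix α γ ℝ) (Xt Xopt Y : Matrix β γ ℝ) (σ ε : ℝ) (hσ : 0 < σ) (hε : 0 < ε)
    (S : Matrix μ' α ℝ)
    (hopt : ∀ X, 1 / 2 * frobSq (H * Xopt - A) + σ / 2 * frobSq (Xopt - Xt) ≤
      1 / 2 * frobSq (H * X - A) + σ / 2 * frobSq (X - Xt))
    (hY : ∀ X, 1 / 2 * frobSq (S * H * Y - S * A) + σ / 2 * frobSq (Y - Xt) ≤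
      1 / 2 * frobSq (S * H * X - S * A) + σ / 2 * frobSq (X - Xt))
    (h1 : frobSq ((S * U)ᵀ * (S * U) - Uᵀ * U) ≤ 1 / 4)
    (h2 : frobSq ((S * U)ᵀ * (S * (H * Xopt - A)) - Uᵀ * (H * Xopt - A)) ≤
      ε / 4 * frobSq (H * Xopt - A)) :
    1 / 2 * frobSq (H * Y - A) + σ / 2 * frobSq (Y - Xt) ≤
      (1 + ε) * (1 / 2 * frobSq (H * Xopt - A) + σ / 2 * frobSq (Xopt - Xt)) := by
  obtain ⟨D, rfl⟩ : ∃ D, Y = Xopt + D := ⟨Y - Xopt, by abel⟩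
  have n1 := min_normal H A Xopt Xt D σ hopt
  have n2 := min_normal (S * H) (S * A) (Xopt + D) Xt D σ hY
  have e1 : H * (Xopt + D) - A = (H * Xopt - A) + H * D := by
    rw [Matrix.mul_add]; abel
  have e2 : Xopt + D - Xt = (Xopt - Xt) + D := by abel
  have e3 : S * H * (Xopt + D) - S * A = S * (H * Xopt - A) + S * (H * D) := by
    rw [Matrix.mul_sub, Matrix.mul_add, Matrix.mul_assoc, Matrix.mul_assoc]; abel
  have e4 : H * D = U * (W * D) := by rw [hH, Matrix.mul_assoc]
  rw [e3, e2, Matrix.mul_assoc S H D] at n2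
  rw [e1, e2]
  rw [e4] at n1 n2 ⊢
  generalize H * Xopt - A = R at *
  generalize Xopt - Xt = Q at *
  generalize W * D = Z at *
  set N := (S * U)ᵀ * (S * R) - Uᵀ * R with hN
  set M := (S * U)ᵀ * (S * U) - Uᵀ * U with hM
  have k1 : fip (S * (U * Z)) (S * R) - fip (U * Z) R = fip Z N := by
    rw [hN, fip_sub_right, ← fip_mul_left, ← fip_mul_left, Matrix.mul_assoc]
  have k2 : frobSq (S * (U * Z)) - frobSq (U * Z) = fip Z (M * Z) := by
    rw [hM, Matrix.sub_mul, fip_sub_right, frobSq_eq, frobSq_eq, Matrix.mul_assoc (S * U)ᵀ,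
      Matrix.mul_assoc Uᵀ, ← fip_mul_left, ← fip_mul_left, Matrix.mul_assoc S]
  have k3 : frobSq (U * Z) = frobSq Z := by
    rw [frobSq_eq, fip_mul_left, ← Matrix.mul_assoc, hU, Matrix.one_mul, frobSq_eq]
  have k4 : fip Z (M * Z) ^ 2 ≤ (1 / 2 * frobSq Z) ^ 2 := by
    refine (fip_sq_le _ _).trans ?_
    have := frobSq_mul_le M Z
    have hz := frobSq_nonneg Z
    have : frobSq (M * Z) ≤ 1 / 4 * frobSq Z := this.trans (mul_le_mul_of_nonneg_right h1 hz)
    nlinarith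
  have k5 := (abs_le_of_sq_le_sq' k4 (by have := frobSq_nonneg Z; positivity)).1
  have k6 := fip_sq_le Z N
  have k7 := mul_le_mul_of_nonneg_left h2 (frobSq_nonneg Z)
  rw [fip_add_left, fip_add_left, ← frobSq_eq, ← frobSq_eq, fip_comm (S * R)] at n2
  rw [fip_comm R] at n1
  have hz := frobSq_nonneg Z
  have hd := frobSq_nonneg D
  have hr := frobSq_nonneg R
  have hq := frobSq_nonneg Q
  have hT : 1 / 2 * frobSq Z + σ * frobSq D ≤ - fip Z N := by linarith
  have hsd : 0 ≤ σ * frobSq D := by positivity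
  have hfin : - fip Z N ≤ ε * frobSq R / 2 := by
    set T := - fip Z N
    have : T ^ 2 ≤ frobSq Z * (ε / 4 * frobSq R) := by
      have : T ^ 2 = fip Z N ^ 2 := by simp [T]
      linarith
    have hTz : frobSq Z ≤ 2 * T := by linarith
    have h3 : T ^ 2 ≤ 2 * T * (ε / 4 * frobSq R) :=
      this.trans (mul_le_mul_of_nonneg_right hTz (by positivity))
    by_cases hT0 : T ≤ 0
    · exact hT0.trans (by positivity)
    · push Not at hT0
      nlinarith
  have ex : 1 / 2 * frobSq (R + U * Z) + σ / 2 * frobSq (Q + D) =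
      1 / 2 * frobSq R + σ / 2 * frobSq Q + 1 / 2 * frobSq Z + σ / 2 * frobSq D := by
    rw [← k3]
    rw [fip_comm] at n1
    simp only [frobSq_eq, fip_add_left, fip_add_right]
    rw [fip_comm (U * Z) R, fip_comm D Q]
    linarith
  rw [ex]
  have : 0 ≤ ε * (σ / 2 * frobSq Q) := by positivity
  nlinarith

lemma exists_orthonormal {α β : Type*} [Fintype α] [Fintype β] [DecidableEq β]
    (H : Matrix α β ℝ) : ∃ (r : ℕ) (U : Matrix α (Fin r) ℝ) (W : Matrix (Fin r) β ℝ),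
      r ≤ Fintype.card β ∧ Uᵀ * U = 1 ∧ H = U * W := by
  let L := Submodule.span ℝ (Set.range fun c : β => (WithLp.toLp 2 (Hᵀ c) : EuclideanSpace ℝ α))
  let b := stdOrthonormalBasis ℝ L
  refine ⟨Module.finrank ℝ L, Matrix.of fun i a => (b a : EuclideanSpace ℝ α) i,
    Matrix.of fun a c => inner ℝ (b a : EuclideanSpace ℝ α) (WithLp.toLp 2 (Hᵀ c)), ?_, ?_, ?_⟩
  · exact finrank_range_le_card _
  · ext a c
    have := orthonormal_iff_ite.1 b.orthonormal a c
    rw [Submodule.coe_inner, PiLp.inner_apply] at this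
    rw [Matrix.mul_apply, Matrix.one_apply, ← this]
    refine Finset.sum_congr rfl fun i _ => ?_
    exact mul_comm _ _
  · ext i c
    have hmem : (WithLp.toLp 2 (Hᵀ c) : EuclideanSpace ℝ α) ∈ L := Submodule.subset_span ⟨c, rfl⟩
    have h1 := congrArg (fun x : L => (x : EuclideanSpace ℝ α)) (b.sum_repr' ⟨_, hmem⟩)
    have h2 := congrArg (fun x : EuclideanSpace ℝ α => x i) h1
    simp only [Submodule.coe_sum, Submodule.coe_smul, Submodule.coe_inner, WithLp.ofLp_sum,
      Finset.sum_apply, PiLp.smul_apply, smul_eq_mul] at h2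
    rw [Matrix.mul_apply]
    refine Eq.trans h2.symm ?_
    refine Finset.sum_congr rfl fun a _ => ?_
    exact mul_comm _ _

/-- expectation bound for a random CountSketch-type matrix -/
lemma amm_bound {Θ I α β : Type*} [Fintype Θ] [Fintype I] [DecidableEq I] [Fintype α] [Fintype β]
    {m : ℕ} (P : Θ → ℝ) (h : Θ → I → Fin m) (s : Θ → I → ℝ)
    (hs : ∀ θ i, s θ i * s θ i = 1) (K : I → I → I → I → ℝ) (C : ℝ) (hC : KerBd K C)
    (hmom : ∀ i j k l, i ≠ j →
      |∑ θ, P θ * ((s θ i * s θ j * s θ k * s θ l) *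
        ((if h θ i = h θ j then 1 else 0) * (if h θ k = h θ l then 1 else 0)))| ≤
        K i j k l / m)
    (hK : ∀ i j k l, 0 ≤ K i j k l)
    (U : Matrix I α ℝ) (R : Matrix I β ℝ) :
    ∑ θ, P θ * frobSq ((countSketch (h θ) (s θ) * U)ᵀ * (countSketch (h θ) (s θ) * R) - Uᵀ * R)
      ≤ C / m * (frobSq U * frobSq R) := by
  let z : Θ → I → I → ℝ := fun θ i j =>
    if i = j then 0 else s θ i * s θ j * (if h θ i = h θ j then 1 else 0)
  have entry : ∀ θ a b, ((countSketch (h θ) (s θ) * U)ᵀ * (countSketch (h θ) (s θ) * R)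
      - Uᵀ * R) a b = ∑ i, ∑ j, U i a * R j b * z θ i j := by
    intro θ a b
    have e1 : ((countSketch (h θ) (s θ) * U)ᵀ * (countSketch (h θ) (s θ) * R)) a b =
        ∑ i, ∑ j, U i a * R j b * (s θ i * s θ j * (if h θ i = h θ j then 1 else 0)) := by
      simp only [Matrix.mul_apply, Matrix.transpose_apply, countSketch, Matrix.of_apply,
        Finset.sum_mul_sum]
      rw [Finset.sum_comm]
      refine Finset.sum_congr rfl fun i _ => ?_
      rw [Finset.sum_comm]
      refine Finset.sum_congr rfl fun j _ => ?_
      rw [Finset.sum_eq_single (h θ i) (by intro x _ hx; simp [hx.symm]) (by simp)]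
      by_cases hij : h θ i = h θ j
      · simp [hij]; ring
      · simp [hij, Ne.symm hij]
    have e2 : (Uᵀ * R) a b = ∑ i, ∑ j, U i a * R j b * (if i = j then 1 else 0) := by
      simp [Matrix.mul_apply]
    rw [Matrix.sub_apply, e1, e2, ← Finset.sum_sub_distrib]
    refine Finset.sum_congr rfl fun i _ => ?_
    rw [← Finset.sum_sub_distrib]
    refine Finset.sum_congr rfl fun j _ => ?_
    by_cases hij : i = j
    · subst hij; simp [z, hs]
    · simp [z, hij]
  have zmom : ∀ i j k l, |∑ θ, P θ * (z θ i j * z θ k l)| ≤ K i j k l / m := by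
    intro i j k l
    by_cases hij : i = j
    · simp only [z, hij, if_true, zero_mul, mul_zero, Finset.sum_const_zero, abs_zero]
      exact div_nonneg (hK _ _ _ _) (Nat.cast_nonneg _)
    by_cases hkl : k = l
    · simp only [z, hkl, if_true, mul_zero, Finset.sum_const_zero, abs_zero]
      exact div_nonneg (hK _ _ _ _) (Nat.cast_nonneg _)
    refine le_trans (le_of_eq ?_) (hmom i j k l hij)
    congr 1
    refine Finset.sum_congr rfl fun θ _ => ?_
    simp only [z, hij, hkl, if_false]
    ring
  have col : ∀ a b, ∑ θ, P θ * (∑ i, ∑ j, U i a * R j b * z θ i j) ^ 2 ≤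
      C / m * ((∑ i, U i a ^ 2) * ∑ i, R i b ^ 2) := by
    intro a b
    have e1 : ∑ θ, P θ * (∑ i, ∑ j, U i a * R j b * z θ i j) ^ 2 =
        ∑ i, ∑ j, ∑ k, ∑ l, (U i a * R j b * U k a * R l b) *
          ∑ θ, P θ * (z θ i j * z θ k l) := by
      have : ∀ θ, P θ * (∑ i, ∑ j, U i a * R j b * z θ i j) ^ 2 =
          ∑ i, ∑ j, ∑ k, ∑ l, P θ * (U i a * R j b * U k a * R l b) * (z θ i j * z θ k l) := by
        intro θ
        rw [sq, Finset.sum_mul, Finset.mul_sum]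
        refine Finset.sum_congr rfl fun i _ => ?_
        rw [Finset.sum_mul, Finset.mul_sum]
        refine Finset.sum_congr rfl fun j _ => ?_
        rw [Finset.mul_sum, Finset.mul_sum]
        refine Finset.sum_congr rfl fun k _ => ?_
        rw [Finset.mul_sum, Finset.mul_sum]
        refine Finset.sum_congr rfl fun l _ => ?_
        ring
      rw [Finset.sum_congr rfl fun θ _ => this θ, Finset.sum_comm]
      refine Finset.sum_congr rfl fun i _ => ?_
      rw [Finset.sum_comm]
      refine Finset.sum_congr rfl fun j _ => ?_
      rw [Finset.sum_comm]
      refine Finset.sum_congr rfl fun k _ => ?_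
      rw [Finset.sum_comm]
      refine Finset.sum_congr rfl fun l _ => ?_
      rw [Finset.mul_sum]
      refine Finset.sum_congr rfl fun θ _ => ?_
      ring
    rw [e1]
    have hb := hC (fun i => |U i a|) (fun i => |R i b|) (fun i => |U i a|) (fun i => |R i b|)
      (fun _ => abs_nonneg _) (fun _ => abs_nonneg _) (fun _ => abs_nonneg _)
      (fun _ => abs_nonneg _)
    simp only [sq_abs] at hb
    have hsU := Real.mul_self_sqrt (Finset.sum_nonneg fun i (_ : i ∈ Finset.univ) =>
      sq_nonneg (U i a))
    have hsR := Real.mul_self_sqrt (Finset.sum_nonneg fun i (_ : i ∈ Finset.univ) =>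
      sq_nonneg (R i b))
    calc _ ≤ ∑ i, ∑ j, ∑ k, ∑ l, (|U i a| * |R j b| * |U k a| * |R l b| * K i j k l) / m := by
          refine Finset.sum_le_sum fun i _ => Finset.sum_le_sum fun j _ =>
            Finset.sum_le_sum fun k _ => Finset.sum_le_sum fun l _ => ?_
          refine (le_abs_self _).trans ?_
          rw [abs_mul, abs_mul, abs_mul, abs_mul, mul_div_assoc]
          exact mul_le_mul_of_nonneg_left (zmom i j k l) (by positivity)
      _ = (∑ i, ∑ j, ∑ k, ∑ l, (|U i a| * |R j b| * |U k a| * |R l b| * K i j k l)) / m := by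
          simp only [Finset.sum_div]
      _ ≤ _ := by
          refine (div_le_div_of_nonneg_right hb (Nat.cast_nonneg m)).trans (le_of_eq ?_)
          calc _ = C / m * ((√(∑ x, U x a ^ 2) * √(∑ x, U x a ^ 2)) *
                (√(∑ x, R x b ^ 2) * √(∑ x, R x b ^ 2))) := by ring
            _ = _ := by rw [hsU, hsR]
  have hU : frobSq U = ∑ a, ∑ i, U i a ^ 2 := by rw [frobSq, Finset.sum_comm]
  have hR : frobSq R = ∑ a, ∑ i, R i a ^ 2 := by rw [frobSq, Finset.sum_comm]
  rw [hU, hR, Finset.sum_mul_sum, Finset.mul_sum]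
  have : ∀ θ, P θ * frobSq ((countSketch (h θ) (s θ) * U)ᵀ * (countSketch (h θ) (s θ) * R)
      - Uᵀ * R) = ∑ a, ∑ b, P θ * (∑ i, ∑ j, U i a * R j b * z θ i j) ^ 2 := by
    intro θ
    simp only [frobSq, entry, Finset.mul_sum]
  rw [Finset.sum_congr rfl fun θ _ => this θ, Finset.sum_comm]
  refine Finset.sum_le_sum fun a _ => ?_
  rw [Finset.sum_comm, Finset.mul_sum]
  exact Finset.sum_le_sum fun b _ => col a b

open Classical in
lemma nullMeas_of_partition {Ω α : Type*} [MeasurableSpace Ω] (μ : Measure Ω)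
    [IsProbabilityMeasure μ] [Fintype α] (f : Ω → α) (h : ∑ a, μ {ω | f ω = a} = 1) (a : α) :
    NullMeasurableSet {ω | f ω = a} μ := by
  set A := {ω | f ω = a} with hA
  have hc : μ A + μ Aᶜ ≤ 1 := by
    rw [← h, ← Finset.add_sum_erase _ _ (Finset.mem_univ a)]
    gcongr
    refine le_trans (measure_mono ?_) (measure_biUnion_finset_le (Finset.univ.erase a) _)
    intro ω hω
    simp only [Set.mem_iUnion]
    exact ⟨f ω, by simpa [hA] using hω, rfl⟩
  set B := toMeasurable μ A
  set C := toMeasurable μ Aᶜ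
  have hB : μ B = μ A := measure_toMeasurable _
  have hC : μ C = μ Aᶜ := measure_toMeasurable _
  have hAB : A ⊆ B := subset_toMeasurable _ _
  have hAC : Aᶜ ⊆ C := subset_toMeasurable _ _
  have hun : B ∪ C = Set.univ := by
    ext ω; by_cases hω : ω ∈ A
    · simp [hAB hω]
    · simp [hAC hω]
  have h1 := measure_union_add_inter B (measurableSet_toMeasurable μ Aᶜ) (μ := μ)
  change μ (B ∪ C) + μ (B ∩ C) = μ B + μ C at h1
  rw [hun, measure_univ, hB, hC] at h1
  have h2 : μ (B ∩ C) = 0 := by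
    have : 1 + μ (B ∩ C) ≤ 1 + 0 := by rw [h1, add_zero]; exact hc
    simpa using (ENNReal.add_le_add_iff_left ENNReal.one_ne_top).1 this
  have h3 : A =ᵐ[μ] B := by
    refine Filter.EventuallyLE.antisymm (Filter.Eventually.of_forall hAB) ?_
    rw [ae_le_set]
    refine measure_mono_null ?_ h2
    intro ω hω
    exact ⟨hω.1, hAC hω.2⟩
  exact (measurableSet_toMeasurable μ A).nullMeasurableSet.congr h3.symm

lemma sum_fibers {Ω α : Type*} [MeasurableSpace Ω] (μ : Measure Ω)
    [IsProbabilityMeasure μ] (f : Ω → α)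
    (hm : ∀ a, NullMeasurableSet {ω | f ω = a} μ) (s : Finset α) :
    ∑ a ∈ s, (μ {ω | f ω = a}).toReal = (μ {ω | f ω ∈ s}).toReal := by
  rw [← ENNReal.toReal_sum (fun a _ => measure_ne_top _ _),
    ← measure_biUnion_finset₀ _ (fun a _ => hm a)]
  · congr 2
    ext ω; simp
  · intro a _ b _ hab
    refine Disjoint.aedisjoint ?_
    rw [Set.disjoint_left]
    intro ω h1 h2
    exact hab (h1.symm.trans h2)

lemma nullMeas_pi {Ω α ι : Type*} [MeasurableSpace Ω] [Finite ι] (μ : Measure Ω)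
    (f : Ω → ι → α)
    (hm : ∀ i a, NullMeasurableSet {ω | f ω i = a} μ) (g : ι → α) :
    NullMeasurableSet {ω | f ω = g} μ := by
  have : {ω | f ω = g} = ⋂ i, {ω | f ω i = g i} := by
    ext ω; simp [funext_iff]
  rw [this]
  exact NullMeasurableSet.iInter fun i => hm i _

/-! Hash facts. -/
lemma hash_nm {Ω : Type*} [MeasurableSpace Ω] (μ : Measure Ω) [IsProbabilityMeasure μ]
    {n m r : ℕ} [NeZero m] (h : Ω → Fin n → Fin m) (hh : KWiseIndepHash μ r h)
    (g : Fin n → Fin m) : NullMeasurableSet {ω | h ω = g} μ := by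
  refine nullMeas_pi μ h (fun i a => nullMeas_of_partition μ (fun ω => h ω i) ?_ a) g
  rw [Finset.sum_congr rfl fun a _ => hh.1 i a]
  simp
  exact ENNReal.mul_inv_cancel (by simp [NeZero.ne m]) (by simp)

lemma hash_total {Ω : Type*} [MeasurableSpace Ω] (μ : Measure Ω) [IsProbabilityMeasure μ]
    {n m r : ℕ} [NeZero m] (h : Ω → Fin n → Fin m) (hh : KWiseIndepHash μ r h) :
    ∑ g, (μ {ω | h ω = g}).toReal = 1 := by
  rw [sum_fibers μ h (hash_nm μ h hh)]
  simp

lemma hash_pair {Ω : Type*} [MeasurableSpace Ω] (μ : Measure Ω) [IsProbabilityMeasure μ]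
    {n m r : ℕ} [NeZero m] (hr : 2 ≤ r) (h : Ω → Fin n → Fin m) (hh : KWiseIndepHash μ r h)
    (a b : Fin n) (hab : a ≠ b) (c : ZMod m) :
    ∑ g : Fin n → Fin m, (μ {ω | h ω = g}).toReal *
      (if (((g a : ℕ) : ZMod m)) - ((g b : ℕ) : ZMod m) = c then 1 else 0) = 1 / m := by
  have key : ∀ x y : Fin m, ∑ g : Fin n → Fin m, (if g a = x ∧ g b = y then
      (μ {ω | h ω = g}).toReal else 0) = 1 / m * (1 / m) := by
    intro x y
    rw [← Finset.sum_filter, sum_fibers μ h (hash_nm μ h hh)]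
    have := hh.2 {a, b} (by rw [Finset.card_pair hab]; exact hr) (fun i => if i = a then x else y)
    rw [Finset.prod_pair hab, hh.1, hh.1] at this
    have e : {ω | h ω ∈ Finset.univ.filter fun g : Fin n → Fin m => g a = x ∧ g b = y} =
        {ω | ∀ i ∈ ({a, b} : Finset (Fin n)), h ω i = if i = a then x else y} := by
      ext ω; simp [hab.symm]
    rw [e, this]
    simp
  have e : ∀ g : Fin n → Fin m, (μ {ω | h ω = g}).toReal *
      (if (((g a : ℕ) : ZMod m)) - ((g b : ℕ) : ZMod m) = c then (1:ℝ) else 0) =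
      ∑ x : Fin m, ∑ y : Fin m, (if ((x : ℕ) : ZMod m) - ((y : ℕ) : ZMod m) = c then (1:ℝ) else 0) *
        (if g a = x ∧ g b = y then (μ {ω | h ω = g}).toReal else 0) := by
    intro g
    rw [Finset.sum_eq_single (g a) (by intro x _ hx; simp [hx.symm]) (by simp),
      Finset.sum_eq_single (g b) (by intro x _ hx; simp [hx.symm]) (by simp)]
    simp
  rw [Finset.sum_congr rfl fun g _ => e g, Finset.sum_comm]
  have e2 : ∀ x : Fin m, ∑ g : Fin n → Fin m, ∑ y : Fin m,
      (if ((x : ℕ) : ZMod m) - ((y : ℕ) : ZMod m) = c then (1:ℝ) else 0) *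
        (if g a = x ∧ g b = y then (μ {ω | h ω = g}).toReal else 0) =
      ∑ y : Fin m, (if ((x : ℕ) : ZMod m) - ((y : ℕ) : ZMod m) = c then (1:ℝ) else 0) *
        (1 / m * (1 / m)) := by
    intro x
    rw [Finset.sum_comm]
    refine Finset.sum_congr rfl fun y _ => ?_
    rw [← Finset.mul_sum, key]
  rw [Finset.sum_congr rfl fun x _ => e2 x, Finset.sum_comm]
  have e3 : ∀ y : Fin m, ∑ x : Fin m,
      (if ((x : ℕ) : ZMod m) - ((y : ℕ) : ZMod m) = c then (1:ℝ) else 0) *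
        (1 / m * (1 / m)) = 1 / m * (1 / m) := by
    intro y
    have hx : ∀ x : Fin m, ((x : ℕ) : ZMod m) - ((y : ℕ) : ZMod m) = c ↔
        x = ⟨(c + ((y : ℕ) : ZMod m)).val, ZMod.val_lt _⟩ := by
      intro x
      rw [sub_eq_iff_eq_add, Fin.ext_iff]
      constructor
      · intro h1
        have h2 := congrArg ZMod.val h1
        rw [ZMod.val_natCast, Nat.mod_eq_of_lt x.2] at h2
        exact h2
      · intro h1
        simp only at h1
        rw [h1, ZMod.natCast_val, ZMod.cast_id]
    simp only [hx]
    simp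
  rw [Finset.sum_congr rfl fun y _ => e3 y]
  have : (m : ℝ) ≠ 0 := by exact_mod_cast NeZero.ne m
  simp
  field_simp

/-- total hash collision probability under the product law -/
lemma hash_collision {κ : Type*} [Fintype κ] [DecidableEq κ] {N : κ → ℕ} {m : ℕ} [NeZero m]
    (PH : ∀ k, (Fin (N k) → Fin m) → ℝ) (h1 : ∀ k, ∑ g, PH k g = 1)
    (hp : ∀ k (a b : Fin (N k)), a ≠ b → ∀ c : ZMod m, ∑ g : Fin (N k) → Fin m, PH k g *
      (if (((g a : ℕ) : ZMod m)) - ((g b : ℕ) : ZMod m) = c then 1 else 0) = 1 / m)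
    (i j : ∀ k, Fin (N k)) (hij : i ≠ j) :
    ∑ g : (∀ k, Fin (N k) → Fin m), (∏ k, PH k (g k)) *
      (if ∑ k, ((g k (i k) : ℕ) : ZMod m) = ∑ k, ((g k (j k) : ℕ) : ZMod m) then 1 else 0)
      = 1 / m := by
  obtain ⟨t, ht⟩ : ∃ t, i t ≠ j t := by
    by_contra hcon; push Not at hcon; exact hij (funext hcon)
  rw [← (Equiv.piSplitAt t (fun k => Fin (N k) → Fin m)).symm.sum_comp, Fintype.sum_prod_type,
    Finset.sum_comm]
  have e : ∀ (y : ∀ k : {k // k ≠ t}, Fin (N k) → Fin m),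
      ∑ x : Fin (N t) → Fin m, (∏ k, PH k ((Equiv.piSplitAt t (fun k => Fin (N k) → Fin m)).symm
        (x, y) k)) * (if ∑ k, ((((Equiv.piSplitAt t (fun k => Fin (N k) → Fin m)).symm
        (x, y) k) (i k) : ℕ) : ZMod m) = ∑ k, ((((Equiv.piSplitAt t (fun k => Fin (N k) → Fin m)).symm
        (x, y) k) (j k) : ℕ) : ZMod m) then 1 else 0) = (∏ k, PH k.1 (y k)) * (1 / m) := by
    intro y
    rw [← hp t (i t) (j t) ht
      (∑ k : {k // k ≠ t}, ((y k (j k) : ℕ) : ZMod m) - ∑ k : {k // k ≠ t}, ((y k (i k) : ℕ) : ZMod m)),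
      Finset.mul_sum]
    refine Finset.sum_congr rfl fun x _ => ?_
    have ex : ∀ k : {k // k ≠ t}, (Equiv.piSplitAt t (fun k => Fin (N k) → Fin m)).symm (x, y) k.1
        = y k := by
      intro k; simp [Equiv.piSplitAt, k.2]
    have ext : (Equiv.piSplitAt t (fun k => Fin (N k) → Fin m)).symm (x, y) t = x := by
      simp [Equiv.piSplitAt]
    rw [Fintype.prod_eq_mul_prod_subtype_ne _ t, Fintype.sum_eq_add_sum_subtype_ne _ t,
      Fintype.sum_eq_add_sum_subtype_ne _ t]
    simp only [ex, ext]
    rw [mul_comm (PH t x), mul_assoc]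
    congr 3
    rw [eq_iff_iff]
    constructor <;> intro hh <;> linear_combination hh
  rw [Finset.sum_congr rfl fun y _ => e y, ← Finset.sum_mul,
    ← Fintype.prod_sum (fun (k : {k // k ≠ t}) => PH k.1)]
  simp [h1]

/-! Sign facts. -/
def sg (b : Bool) : ℝ := if b then 1 else -1

lemma sg_not (b : Bool) : sg (!b) = - sg b := by cases b <;> simp [sg]
lemma sg_mul_self (b : Bool) : sg b * sg b = 1 := by cases b <;> simp [sg]
lemma sg_abs (b : Bool) : |sg b| = 1 := by cases b <;> simp [sg]
lemma sg_or (b : Bool) : sg b = 1 ∨ sg b = -1 := by cases b <;> simp [sg]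

lemma sg_iff {x : ℝ} (hx : x = 1 ∨ x = -1) (b : Bool) : x = sg b ↔ decide (x = 1) = b := by
  rcases hx with rfl | rfl <;> cases b <;> norm_num [sg]

lemma sign_set {Ω : Type*} [MeasurableSpace Ω] {μ : Measure Ω} {n r : ℕ} {v : Ω → Fin n → ℝ}
    (hv : KWiseIndepSign μ r v) (w : Fin n → Bool) :
    {ω | v ω = fun i => sg (w i)} = {ω | (fun i => decide (v ω i = 1)) = w} := by
  ext ω
  simp only [Set.mem_ofPred_eq, funext_iff]
  exact forall_congr' fun i => sg_iff (hv.1 ω i) (w i)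

lemma sign_nm {Ω : Type*} [MeasurableSpace Ω] (μ : Measure Ω) [IsProbabilityMeasure μ]
    {n r : ℕ} (v : Ω → Fin n → ℝ) (hv : KWiseIndepSign μ r v)
    (w : Fin n → Bool) : NullMeasurableSet {ω | (fun i => decide (v ω i = 1)) = w} μ := by
  refine nullMeas_pi μ (fun ω i => decide (v ω i = 1))
    (fun i a => nullMeas_of_partition μ (fun ω => decide (v ω i = 1)) ?_ a) w
  have : ∀ a : Bool, μ {ω | decide (v ω i = 1) = a} = 1 / 2 := by
    intro a
    rw [← hv.2.1 i (sg a) (sg_or a)]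
    congr 1
    ext ω
    exact (sg_iff (hv.1 ω i) a).symm
  simp only [this, Fintype.sum_bool]
  exact ENNReal.add_halves 1

lemma sign_total {Ω : Type*} [MeasurableSpace Ω] (μ : Measure Ω) [IsProbabilityMeasure μ]
    {n r : ℕ} (v : Ω → Fin n → ℝ) (hv : KWiseIndepSign μ r v) :
    ∑ w : Fin n → Bool, (μ {ω | v ω = fun i => sg (w i)}).toReal = 1 := by
  simp only [sign_set hv]
  rw [sum_fibers μ _ (sign_nm μ v hv)]
  simp

lemma sign_marg {Ω : Type*} [MeasurableSpace Ω] (μ : Measure Ω) [IsProbabilityMeasure μ]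
    {n r : ℕ} (v : Ω → Fin n → ℝ) (hv : KWiseIndepSign μ r v) (T : Finset (Fin n))
    (hT : T.card ≤ r) (w' : Fin n → Bool) :
    ∑ w : Fin n → Bool, (if ∀ i ∈ T, w i = w' i then
      (μ {ω | v ω = fun i => sg (w i)}).toReal else 0) = (1 / 2) ^ T.card := by
  simp only [sign_set hv]
  rw [← Finset.sum_filter, sum_fibers μ _ (sign_nm μ v hv)]
  have := hv.2.2 T hT (fun i => sg (w' i))
  rw [Finset.prod_congr rfl fun i _ => hv.2.1 i _ (sg_or _)] at this
  have e : {ω | (fun i => decide (v ω i = 1)) ∈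
      Finset.univ.filter fun w : Fin n → Bool => ∀ i ∈ T, w i = w' i} =
      {ω | ∀ i ∈ T, v ω i = sg (w' i)} := by
    ext ω
    simp only [Finset.mem_filter, Finset.mem_univ, true_and, Set.mem_ofPred_eq]
    exact forall_congr' fun i => forall_congr' fun _ => (sg_iff (hv.1 ω i) (w' i)).symm
  rw [e, this]
  simp

lemma sign_local_zero {Ω : Type*} [MeasurableSpace Ω] (μ : Measure Ω) [IsProbabilityMeasure μ]
    {n r : ℕ} (v : Ω → Fin n → ℝ) (hv : KWiseIndepSign μ r v) (T : Finset (Fin n))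
    (hT : T.card ≤ r) (F : (Fin n → Bool) → ℝ)
    (hF : ∀ w w', (∀ i ∈ T, w i = w' i) → F w = F w')
    (e : Fin n) (hflip : ∀ w, F (Function.update w e (!w e)) = - F w) :
    ∑ w : Fin n → Bool, (μ {ω | v ω = fun i => sg (w i)}).toReal * F w = 0 := by
  set P : (Fin n → Bool) → ℝ := fun w => (μ {ω | v ω = fun i => sg (w i)}).toReal with hP
  have hsum0 : ∑ w, F w = 0 := by
    have hinv : Function.Involutive (fun w : Fin n → Bool => Function.update w e (!w e)) := by
      intro w; simp
    have := Equiv.sum_comp hinv.toPerm F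
    have h2 : ∀ w : Fin n → Bool, F ((Function.Involutive.toPerm _ hinv) w) = - F w := hflip
    simp only [h2, Finset.sum_neg_distrib] at this
    linarith
  set Nn : ℝ := ∏ i : Fin n, if i ∈ T then (1 : ℝ) else 2 with hN
  have hNpos : 0 < Nn := Finset.prod_pos fun i _ => by split_ifs <;> norm_num
  have hcount : ∀ w : Fin n → Bool, ∑ w' : Fin n → Bool,
      (if ∀ i ∈ T, w i = w' i then (1 : ℝ) else 0) = Nn := by
    intro w
    have : ∀ w' : Fin n → Bool, (if ∀ i ∈ T, w i = w' i then (1 : ℝ) else 0) =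
        ∏ i, (if i ∈ T then (if w i = w' i then 1 else 0) else 1) := by
      intro w'
      by_cases h : ∀ i ∈ T, w i = w' i
      · rw [if_pos h, Finset.prod_eq_one]
        intro i _
        by_cases hi : i ∈ T
        · simp [hi, h i hi]
        · simp [hi]
      · rw [if_neg h]
        push Not at h
        obtain ⟨i, hi, hne⟩ := h
        exact (Finset.prod_eq_zero (Finset.mem_univ i) (by simp [hi, hne])).symm
    rw [Finset.sum_congr rfl fun w' _ => this w',
      ← Fintype.prod_sum (fun (i : Fin n) (b : Bool) =>
        if i ∈ T then (if w i = b then (1 : ℝ) else 0) else 1)]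
    refine Finset.prod_congr rfl fun i _ => ?_
    by_cases hi : i ∈ T
    · simp only [hi, if_true, Fintype.sum_bool]
      cases w i <;> simp
    · simp only [hi, if_false, Fintype.sum_bool]; norm_num
  have key : Nn * ∑ w, P w * F w = (1 / 2) ^ T.card * ∑ w', F w' := by
    rw [Finset.mul_sum, Finset.mul_sum]
    calc _ = ∑ w, ∑ w', (if ∀ i ∈ T, w i = w' i then P w else 0) * F w' := by
          refine Finset.sum_congr rfl fun w _ => ?_
          rw [← hcount w, Finset.sum_mul]
          refine Finset.sum_congr rfl fun w' _ => ?_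
          by_cases h : ∀ i ∈ T, w i = w' i
          · rw [if_pos h, if_pos h, hF w w' h]; ring
          · rw [if_neg h, if_neg h]; ring
      _ = _ := by
          rw [Finset.sum_comm]
          refine Finset.sum_congr rfl fun w' _ => ?_
          rw [← Finset.sum_mul, sign_marg μ v hv T hT w']
  rw [hsum0, mul_zero] at key
  exact (mul_eq_zero.1 key).resolve_left hNpos.ne'

lemma sign_four {Ω : Type*} [MeasurableSpace Ω] (μ : Measure Ω) [IsProbabilityMeasure μ]
    {n : ℕ} (v : Ω → Fin n → ℝ) (hv : KWiseIndepSign μ 4 v) (a b c d : Fin n) :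
    |∑ w : Fin n → Bool, (μ {ω | v ω = fun i => sg (w i)}).toReal *
      (sg (w a) * sg (w b) * sg (w c) * sg (w d))| ≤ pairKer a b c d := by
  by_cases hp : (a = b ∧ c = d) ∨ (a = c ∧ b = d) ∨ (a = d ∧ b = c)
  · have h1 : (1 : ℝ) ≤ pairKer a b c d := by
      unfold pairKer
      rcases hp with h | h | h
      · rw [if_pos h, add_assoc]
        have : (0:ℝ) ≤ (if a = c ∧ b = d then 1 else 0) + (if a = d ∧ b = c then 1 else 0) := by
          positivity
        linarith
      · rw [if_pos h]
        have h1 : (0:ℝ) ≤ (if a = b ∧ c = d then 1 else 0) := by positivity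
        have h2 : (0:ℝ) ≤ (if a = d ∧ b = c then 1 else 0) := by positivity
        linarith
      · rw [if_pos h]
        have : (0:ℝ) ≤ (if a = b ∧ c = d then 1 else 0) + (if a = c ∧ b = d then 1 else 0) := by
          positivity
        linarith
    refine le_trans ?_ h1
    refine (Finset.abs_sum_le_sum_abs _ _).trans ?_
    rw [← sign_total μ v hv]
    refine Finset.sum_le_sum fun w _ => ?_
    rw [abs_mul, abs_mul, abs_mul, abs_mul]
    simp [sg_abs]
  · refine le_trans (le_of_eq ?_) (pairKer_nonneg a b c d)
    rw [abs_eq_zero]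
    have hex : ∃ e : Fin n, ∀ w : Fin n → Bool,
        sg (Function.update w e (!w e) a) * sg (Function.update w e (!w e) b) *
        sg (Function.update w e (!w e) c) * sg (Function.update w e (!w e) d) =
        -(sg (w a) * sg (w b) * sg (w c) * sg (w d)) := by
      by_cases hab : a = b
      · subst hab
        have hcd : c ≠ d := fun h => hp (Or.inl ⟨rfl, h⟩)
        refine ⟨c, fun w => ?_⟩
        by_cases hac : a = c
        · subst hac
          simp [Function.update_of_ne hcd.symm, sg_not]
        · simp [Function.update_of_ne hcd.symm, Function.update_of_ne hac, sg_not]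
      · by_cases hac : a = c
        · subst hac
          have hbd : b ≠ d := fun h => hp (Or.inr (Or.inl ⟨rfl, h⟩))
          refine ⟨b, fun w => ?_⟩
          simp [Function.update_of_ne hbd.symm, Function.update_of_ne hab, sg_not]
        · by_cases had : a = d
          · subst had
            have hbc : b ≠ c := fun h => hp (Or.inr (Or.inr ⟨rfl, h⟩))
            refine ⟨b, fun w => ?_⟩
            simp [Function.update_of_ne hbc.symm, Function.update_of_ne hab, sg_not]
          · refine ⟨a, fun w => ?_⟩
            simp [Function.update_of_ne (Ne.symm hab), Function.update_of_ne (Ne.symm hac),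
              Function.update_of_ne (Ne.symm had), sg_not]
    obtain ⟨e, he⟩ := hex
    refine sign_local_zero μ v hv {a, b, c, d} Finset.card_le_four
      (fun w => sg (w a) * sg (w b) * sg (w c) * sg (w d)) ?_ e he
    intro w w' h
    rw [h a (by simp), h b (by simp), h c (by simp), h d (by simp)]

lemma moment {κ : Type*} [Fintype κ] [DecidableEq κ] {N : κ → ℕ} {m : ℕ}
    (PH : ∀ k, (Fin (N k) → Fin m) → ℝ) (PV : ∀ k, (Fin (N k) → Bool) → ℝ)
    (h0 : ∀ k g, 0 ≤ PH k g) (i j k l : ∀ t, Fin (N t))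
    (hV : ∀ t, |∑ w, PV t w * (sg (w (i t)) * sg (w (j t)) * sg (w (k t)) * sg (w (l t)))| ≤
      pairKer (i t) (j t) (k t) (l t))
    (c1 c2 : (∀ t, Fin (N t) → Fin m) → ℝ) (h1 : ∀ g, 0 ≤ c1 g) (h2 : ∀ g, 0 ≤ c2 g ∧ c2 g ≤ 1)
    (hc : ∑ g, (∏ t, PH t (g t)) * c1 g = 1 / m) :
    |∑ θ : (∀ t, Fin (N t) → Fin m) × (∀ t, Fin (N t) → Bool),
      ((∏ t, PH t (θ.1 t)) * ∏ t, PV t (θ.2 t)) *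
      (((∏ t, sg (θ.2 t (i t))) * (∏ t, sg (θ.2 t (j t))) * (∏ t, sg (θ.2 t (k t))) *
        (∏ t, sg (θ.2 t (l t)))) * (c1 θ.1 * c2 θ.1))| ≤
      (∏ t, pairKer (i t) (j t) (k t) (l t)) / m := by
  have e : ∑ θ : (∀ t, Fin (N t) → Fin m) × (∀ t, Fin (N t) → Bool),
      ((∏ t, PH t (θ.1 t)) * ∏ t, PV t (θ.2 t)) *
      (((∏ t, sg (θ.2 t (i t))) * (∏ t, sg (θ.2 t (j t))) * (∏ t, sg (θ.2 t (k t))) *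
        (∏ t, sg (θ.2 t (l t)))) * (c1 θ.1 * c2 θ.1)) =
      (∑ g, (∏ t, PH t (g t)) * (c1 g * c2 g)) *
      ∏ t, ∑ w, PV t w * (sg (w (i t)) * sg (w (j t)) * sg (w (k t)) * sg (w (l t))) := by
    rw [Fintype.prod_sum, Finset.sum_mul_sum, Fintype.sum_prod_type]
    refine Finset.sum_congr rfl fun g _ => Finset.sum_congr rfl fun w _ => ?_
    simp only [Finset.prod_mul_distrib]
    ring
  rw [e, abs_mul, Finset.abs_prod, mul_comm, div_eq_mul_one_div]
  refine mul_le_mul (Finset.prod_le_prod (fun t _ => abs_nonneg _) fun t _ => hV t) ?_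
    (abs_nonneg _) (Finset.prod_nonneg fun t _ => pairKer_nonneg _ _ _ _)
  rw [← hc, abs_of_nonneg]
  · refine Finset.sum_le_sum fun g _ => mul_le_mul_of_nonneg_left ?_
      (Finset.prod_nonneg fun t _ => h0 _ _)
    exact mul_le_of_le_one_right (h1 g) (h2 g).2
  · exact Finset.sum_nonneg fun g _ => mul_nonneg (Finset.prod_nonneg fun t _ => h0 _ _)
      (mul_nonneg (h1 g) (h2 g).1)

lemma markov_fin {Ω Θ : Type*} [MeasurableSpace Ω] (μ : Measure Ω) [IsProbabilityMeasure μ]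
    [Fintype Θ] (X : Ω → Θ) (P : Θ → ℝ) (hP : ∀ θ, (μ {ω | X ω = θ}).toReal = P θ)
    (Φ : Θ → ℝ) (hΦ : ∀ θ, 0 ≤ Φ θ) (c : ℝ) (hc : 0 < c) :
    (μ {ω | c < Φ (X ω)}).toReal ≤ (∑ θ, P θ * Φ θ) / c := by
  classical
  have hP0 : ∀ θ, 0 ≤ P θ := fun θ => by rw [← hP]; exact ENNReal.toReal_nonneg
  have h1 : μ {ω | c < Φ (X ω)} ≤ ∑ θ ∈ Finset.univ.filter (fun θ => c < Φ θ), μ {ω | X ω = θ} := by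
    refine le_trans (measure_mono ?_) (measure_biUnion_finset_le _ _)
    intro ω hω
    simp only [Set.mem_iUnion]
    exact ⟨X ω, by simpa using hω, rfl⟩
  have h2 := ENNReal.toReal_mono (by simp [ENNReal.sum_eq_top]) h1
  rw [ENNReal.toReal_sum (fun _ _ => measure_ne_top _ _)] at h2
  refine h2.trans ?_
  rw [le_div_iff₀ hc, Finset.sum_mul, Finset.sum_filter]
  refine Finset.sum_le_sum fun θ _ => ?_
  rw [hP]
  split_ifs with h
  · exact mul_le_mul_of_nonneg_left h.le (hP0 θ)
  · exact mul_nonneg (hP0 θ) (hΦ θ)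

lemma hash_eq_iff {m p q' : ℕ} [NeZero m] {N : Fin p ⊕ Fin q' → ℕ}
    (g : ∀ k, Fin (N k) → Fin m)
    (i j : (∀ t : Fin p, Fin (N (Sum.inl t))) × (∀ t : Fin q', Fin (N (Sum.inr t)))) :
    hashPair (hashFam (n := fun t : Fin p => N (Sum.inl t)) (fun t => g (Sum.inl t)))
      (hashFam (n := fun t : Fin q' => N (Sum.inr t)) (fun t => g (Sum.inr t))) i =
    hashPair (hashFam (n := fun t : Fin p => N (Sum.inl t)) (fun t => g (Sum.inl t)))
      (hashFam (n := fun t : Fin q' => N (Sum.inr t)) (fun t => g (Sum.inr t))) j ↔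
    ∑ k, ((g k ((Equiv.sumPiEquivProdPi (fun k => Fin (N k))).symm i k) : ℕ) : ZMod m) =
    ∑ k, ((g k ((Equiv.sumPiEquivProdPi (fun k => Fin (N k))).symm j k) : ℕ) : ZMod m) := by
  have key : ∀ i : (∀ t : Fin p, Fin (N (Sum.inl t))) × (∀ t : Fin q', Fin (N (Sum.inr t))),
      ((((hashPair (hashFam (n := fun t : Fin p => N (Sum.inl t)) (fun t => g (Sum.inl t)))
      (hashFam (n := fun t : Fin q' => N (Sum.inr t)) (fun t => g (Sum.inr t))) i : Fin m)) : ℕ) :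
        ZMod m) =
      ∑ k, ((g k ((Equiv.sumPiEquivProdPi (fun k => Fin (N k))).symm i k) : ℕ) : ZMod m) := by
    intro i
    rw [Fintype.sum_sum_type]
    simp [hashPair, hashFam, Equiv.sumPiEquivProdPi]
  rw [← key i, ← key j, ZMod.natCast_eq_natCast_iff', Fin.ext_iff,
    Nat.mod_eq_of_lt (Fin.is_lt _), Nat.mod_eq_of_lt (Fin.is_lt _)]

lemma core {Ω : Type*} [MeasurableSpace Ω] (μ : Measure Ω) [IsProbabilityMeasure μ]
    {m p q' : ℕ} [NeZero m] (N : Fin p ⊕ Fin q' → ℕ)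
    (H : ∀ k, Ω → Fin (N k) → Fin m) (V : ∀ k, Ω → Fin (N k) → ℝ)
    (hH : ∀ k, KWiseIndepHash μ 3 (H k)) (hV : ∀ k, KWiseIndepSign μ 4 (V k))
    (hmut : IndepHashSigns μ H V) {α β : Type*} [Fintype α] [Fintype β]
    (U : Matrix ((∀ t : Fin p, Fin (N (Sum.inl t))) × (∀ t : Fin q', Fin (N (Sum.inr t)))) α ℝ)
    (R : Matrix ((∀ t : Fin p, Fin (N (Sum.inl t))) × (∀ t : Fin q', Fin (N (Sum.inr t)))) β ℝ)
    (S : Ω → Matrix (Fin m)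
      ((∀ t : Fin p, Fin (N (Sum.inl t))) × (∀ t : Fin q', Fin (N (Sum.inr t)))) ℝ)
    (hS : ∀ ω, S ω = countSketch
        (hashPair (hashFam (n := fun j : Fin p => N (Sum.inl j)) (fun j => H (Sum.inl j) ω))
                  (hashFam (n := fun j : Fin q' => N (Sum.inr j)) (fun j => H (Sum.inr j) ω)))
        (fun i => (∏ j : Fin p, V (Sum.inl j) ω (i.1 j)) *
          ∏ j : Fin q', V (Sum.inr j) ω (i.2 j)))
    (c : ℝ) (hc : 0 < c) :
    (μ {ω | c < frobSq ((S ω * U)ᵀ * (S ω * R) - Uᵀ * R)}).toReal ≤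
      3 ^ (p + q') / m * (frobSq U * frobSq R) / c := by
  classical
  let PH : ∀ k, (Fin (N k) → Fin m) → ℝ := fun k g => (μ {ω | H k ω = g}).toReal
  let PV : ∀ k, (Fin (N k) → Bool) → ℝ := fun k w => (μ {ω | V k ω = fun i => sg (w i)}).toReal
  let Θ := (∀ t, Fin (N t) → Fin m) × (∀ t, Fin (N t) → Bool)
  let P : Θ → ℝ := fun θ => (∏ t, PH t (θ.1 t)) * ∏ t, PV t (θ.2 t)
  let X : Ω → Θ := fun ω => (fun k => H k ω, fun k i => decide (V k ω i = 1))
  let hh : Θ → ((∀ t : Fin p, Fin (N (Sum.inl t))) × (∀ t : Fin q', Fin (N (Sum.inr t)))) → Fin m :=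
    fun θ => hashPair (hashFam (n := fun t : Fin p => N (Sum.inl t)) (fun t => θ.1 (Sum.inl t)))
      (hashFam (n := fun t : Fin q' => N (Sum.inr t)) (fun t => θ.1 (Sum.inr t)))
  let E := (Equiv.sumPiEquivProdPi (fun k => Fin (N k))).symm
  let ss : Θ → ((∀ t : Fin p, Fin (N (Sum.inl t))) × (∀ t : Fin q', Fin (N (Sum.inr t)))) → ℝ :=
    fun θ i => ∏ k, sg (θ.2 k (E i k))
  let Φ : Θ → ℝ := fun θ => frobSq ((countSketch (hh θ) (ss θ) * U)ᵀ *
    (countSketch (hh θ) (ss θ) * R) - Uᵀ * R)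
  have hVsg : ∀ ω k i, V k ω i = sg (decide (V k ω i = 1)) := fun ω k i =>
    (sg_iff ((hV k).1 ω i) _).2 rfl
  have hSX : ∀ ω, S ω = countSketch (hh (X ω)) (ss (X ω)) := by
    intro ω
    rw [hS]
    congr 1
    funext i
    simp only [ss, X, ← hVsg]
    rw [Fintype.prod_sum_type]
    rfl
  have hP : ∀ θ, (μ {ω | X ω = θ}).toReal = P θ := by
    rintro ⟨g, w⟩
    have := hmut g (fun k i => sg (w k i))
    have e : {ω | X ω = (g, w)} = {ω | (∀ k, H k ω = g k) ∧ ∀ k, V k ω = fun i => sg (w k i)} := by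
      ext ω
      simp only [Set.mem_ofPred_eq, X, funext_iff]
      refine Prod.mk_inj.trans ?_
      simp only [funext_iff]
      refine and_congr Iff.rfl (forall_congr' fun k => forall_congr' fun i => ?_)
      exact (sg_iff ((hV k).1 ω i) _).symm
    rw [e, this, ENNReal.toReal_mul, ENNReal.toReal_prod, ENNReal.toReal_prod]
  have hmk := markov_fin μ X P hP Φ (fun θ => frobSq_nonneg _) c hc
  have e : {ω | c < frobSq ((S ω * U)ᵀ * (S ω * R) - Uᵀ * R)} = {ω | c < Φ (X ω)} := by
    ext ω
    simp only [Set.mem_ofPred_eq, Φ, hSX]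
  rw [e]
  refine hmk.trans (div_le_div_of_nonneg_right ?_ hc.le)
  have hker := kerBd_prod (fun a b c d => Finset.prod_nonneg fun k _ => pairKer_nonneg _ _ _ _)
    (by positivity) (kerBd_pi p (fun t => N (Sum.inl t))) (kerBd_pi q' (fun t => N (Sum.inr t)))
  rw [pow_add]
  refine amm_bound P hh ss ?_ _ _ hker ?_ ?_ U R
  · intro θ i
    simp only [ss]
    rw [← Finset.prod_mul_distrib]
    exact Finset.prod_eq_one fun k _ => sg_mul_self _
  · intro i j k l hij
    have hm := moment PH PV (fun _ _ => ENNReal.toReal_nonneg) (E i) (E j) (E k) (E l)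
      (fun t => sign_four μ (V t) (hV t) _ _ _ _)
      (fun g => if ∑ t, ((g t (E i t) : ℕ) : ZMod m) = ∑ t, ((g t (E j t) : ℕ) : ZMod m)
        then 1 else 0)
      (fun g => if ∑ t, ((g t (E k t) : ℕ) : ZMod m) = ∑ t, ((g t (E l t) : ℕ) : ZMod m)
        then 1 else 0) (fun g => by positivity)
      (fun g => by split_ifs <;> norm_num)
      (hash_collision PH (fun t => hash_total μ (H t) (hH t))
        (fun t a b hab c => hash_pair μ (by norm_num) (H t) (hH t) a b hab c) (E i) (E j)
        (fun h => hij (E.injective h)))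
    rw [Fintype.prod_sum_type] at hm
    refine le_trans (le_of_eq ?_) hm
    congr 1
    refine Finset.sum_congr rfl fun θ _ => ?_
    simp only [P, ss, hh, hash_eq_iff]
    rfl
  · intro i j k l
    exact mul_nonneg (Finset.prod_nonneg fun t _ => pairKer_nonneg _ _ _ _)
      (Finset.prod_nonneg fun t _ => pairKer_nonneg _ _ _ _)

lemma frobSq_orthonormal {α : Type*} [Fintype α] {r : ℕ} (U : Matrix α (Fin r) ℝ)
    (hU : Uᵀ * U = 1) : frobSq U = r := by
  have h := fip_mul_left U (1 : Matrix (Fin r) (Fin r) ℝ) U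
  rw [Matrix.mul_one, hU, ← frobSq_eq] at h
  rw [h]
  simp [fip, Matrix.one_apply]

lemma frobSq_eq_zero {α β : Type*} [Fintype α] [Fintype β] (R : Matrix α β ℝ)
    (h : frobSq R = 0) : R = 0 := by
  ext i j
  have h1 := (Finset.sum_eq_zero_iff_of_nonneg (fun i _ =>
    Finset.sum_nonneg fun j _ => sq_nonneg (R i j))).1 h i (Finset.mem_univ i)
  have h2 := (Finset.sum_eq_zero_iff_of_nonneg (fun j _ => sq_nonneg (R i j))).1 h1 j
    (Finset.mem_univ j)
  simpa using h2

/-- Corollary 4.5, accuracy of the randomized proximal TT-ALS update: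
fix a mode `k` of a `d`-th order tensor, with `p = k-1` TT-cores below (dimensions `na`,
ranks `ra`, `ra 0 = 1`) and `q' = d-k` TT-cores above (dimensions `nb`, ranks `rb`,
`rb q' = 1`), so `r_{k-1} = ra p`, `r_k = rb 0`, `s = r_{k-1} r_k` and `q = d - 1 = p + q'`.
Let `G_{<k}` (rows = chain products of the cores below) and `G_{>k}` (columns = chain
products of the cores above) be the TT interface matrices, and let
`H_k = G_{>k}ᵀ ⊗ G_{<k}` have full column rank with `∏_{i ≠ k} n_i > s`.  Let `A` be the
transposed mode-`k` matricization of the data tensor, `Xt` the (transposed mode-2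
matricized) current core `𝒢_k^{(t)}`, `σ > 0`, and let `S` be the random TensorSketch
matrix generated by mutually independent 3-wise independent hash maps and mutually
independent 4-wise independent sign functions on the modes `≠ k`.  If
`m = max{8s²(2+3^q)/δ, 8s(2+3^q)/(εδ)}`, then with probability at least `1 - δ` the
minimizer of the sketched proximal subproblem has proximal objective value within a factor
`1 + ε` of the optimal value `OPT` of the unsketched proximal subproblem. -/
theorem randomized_proximal_TTALS_accuracy
    {Ω : Type*} [MeasurableSpace Ω] (μ : Measure Ω) [IsProbabilityMeasure μ]
    {m p q' nk : ℕ} [NeZero m]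
    (na ra nb rb : ℕ → ℕ) (hra0 : ra 0 = 1) (hrbq : rb q' = 1)
    (Ga : (j : ℕ) → Fin (na j) → Matrix (Fin (ra j)) (Fin (ra (j + 1))) ℝ)
    (Gb : (j : ℕ) → Fin (nb j) → Matrix (Fin (rb j)) (Fin (rb (j + 1))) ℝ)
    (Glt : Matrix ((j : Fin p) → Fin (na j)) (Fin (ra p)) ℝ)
    (hGlt : ∀ i (a : Fin (ra 0)) c, Glt i c = ttChain ra na Ga p i a c)
    (Ggt : Matrix (Fin (rb 0)) ((j : Fin q') → Fin (nb j)) ℝ)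
    (hGgt : ∀ (a : Fin (rb 0)) i (b : Fin (rb q')), Ggt a i = ttChain rb nb Gb q' i a b)
    (hrank : (Matrix.kroneckerMap (· * ·) Glt Ggtᵀ).rank = ra p * rb 0)
    (hcard : ra p * rb 0 < (∏ j : Fin p, na j) * ∏ j : Fin q', nb j)
    (A : Matrix (((j : Fin p) → Fin (na j)) × ((j : Fin q') → Fin (nb j))) (Fin nk) ℝ)
    (Xt : Matrix (Fin (ra p) × Fin (rb 0)) (Fin nk) ℝ)
    (σ : ℝ) (hσ : 0 < σ)
    (Hlt : (j : Fin p) → Ω → Fin (na j) → Fin m) (Vlt : (j : Fin p) → Ω → Fin (na j) → ℝ)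
    (Hgt : (j : Fin q') → Ω → Fin (nb j) → Fin m) (Vgt : (j : Fin q') → Ω → Fin (nb j) → ℝ)
    (h3lt : ∀ j, KWiseIndepHash μ 3 (Hlt j)) (h4lt : ∀ j, KWiseIndepSign μ 4 (Vlt j))
    (h3gt : ∀ j, KWiseIndepHash μ 3 (Hgt j)) (h4gt : ∀ j, KWiseIndepSign μ 4 (Vgt j))
    (hmut : IndepHashSigns μ (κ := Fin p ⊕ Fin q')
      (n := Sum.elim (fun j : Fin p => na j) (fun j : Fin q' => nb j))
      (fun k => match k with | Sum.inl j => Hlt j | Sum.inr j => Hgt j)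
      (fun k => match k with | Sum.inl j => Vlt j | Sum.inr j => Vgt j))
    (Xopt : Matrix (Fin (ra p) × Fin (rb 0)) (Fin nk) ℝ)
    (hXopt : ∀ X,
      1 / 2 * frobSq (Matrix.kroneckerMap (· * ·) Glt Ggtᵀ * Xopt - A) +
          σ / 2 * frobSq (Xopt - Xt) ≤
        1 / 2 * frobSq (Matrix.kroneckerMap (· * ·) Glt Ggtᵀ * X - A) +
          σ / 2 * frobSq (X - Xt))
    (ε δ : ℝ) (hε : 0 < ε) (hδ : 0 < δ)
    (hm : (m : ℝ) = max (8 * ((ra p * rb 0 : ℕ) : ℝ) ^ 2 * (2 + 3 ^ (p + q')) / δ)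
      (8 * ((ra p * rb 0 : ℕ) : ℝ) * (2 + 3 ^ (p + q')) / (ε * δ))) :
    1 - δ ≤ (μ {ω |
      let S := countSketch
        (hashPair (hashFam (n := fun j : Fin p => na j) (fun j => Hlt j ω))
                  (hashFam (n := fun j : Fin q' => nb j) (fun j => Hgt j ω)))
        (fun i => (∏ j : Fin p, Vlt j ω (i.1 j)) * ∏ j : Fin q', Vgt j ω (i.2 j))
      ∀ Y : Matrix (Fin (ra p) × Fin (rb 0)) (Fin nk) ℝ,
        (∀ X,
          1 / 2 * frobSq (S * Matrix.kroneckerMap (· * ·) Glt Ggtᵀ * Y - S * A) +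
              σ / 2 * frobSq (Y - Xt) ≤
            1 / 2 * frobSq (S * Matrix.kroneckerMap (· * ·) Glt Ggtᵀ * X - S * A) +
              σ / 2 * frobSq (X - Xt)) →
          1 / 2 * frobSq (Matrix.kroneckerMap (· * ·) Glt Ggtᵀ * Y - A) +
              σ / 2 * frobSq (Y - Xt) ≤
            (1 + ε) * (1 / 2 * frobSq (Matrix.kroneckerMap (· * ·) Glt Ggtᵀ * Xopt - A) +
              σ / 2 * frobSq (Xopt - Xt))}).toReal := by
  set Hk := Matrix.kroneckerMap (· * ·) Glt Ggtᵀ with hHk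
  obtain ⟨r, U, W, hr, hU, hUW⟩ := exists_orthonormal Hk
  have hr' : (r : ℝ) ≤ ((ra p * rb 0 : ℕ) : ℝ) := by
    have : r ≤ ra p * rb 0 := by simpa using hr
    exact_mod_cast this
  set s : ℝ := ((ra p * rb 0 : ℕ) : ℝ) with hs
  have hmpos : (0 : ℝ) < m := by exact_mod_cast Nat.pos_of_ne_zero (NeZero.ne m)
  have hs0 : 0 ≤ s := Nat.cast_nonneg _
  have hr0 : (0 : ℝ) ≤ r := Nat.cast_nonneg _
  have hFU : frobSq U = r := frobSq_orthonormal U hU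
  let S : Ω → Matrix (Fin m) (((j : Fin p) → Fin (na j)) × ((j : Fin q') → Fin (nb j))) ℝ :=
    fun ω => countSketch
        (hashPair (hashFam (n := fun j : Fin p => na j) (fun j => Hlt j ω))
                  (hashFam (n := fun j : Fin q' => nb j) (fun j => Hgt j ω)))
        (fun i => (∏ j : Fin p, Vlt j ω (i.1 j)) * ∏ j : Fin q', Vgt j ω (i.2 j))
  have hcore : ∀ {β : Type} [Fintype β]
      (R : Matrix (((j : Fin p) → Fin (na j)) × ((j : Fin q') → Fin (nb j))) β ℝ)
      (c : ℝ) (_ : 0 < c), (μ {ω | c < frobSq ((S ω * U)ᵀ * (S ω * R) - Uᵀ * R)}).toReal ≤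
      3 ^ (p + q') / m * (frobSq U * frobSq R) / c := by
    intro β _ R c hc
    exact core μ (Sum.elim (fun j : Fin p => na j) (fun j : Fin q' => nb j))
      (fun k => match k with | Sum.inl j => Hlt j | Sum.inr j => Hgt j)
      (fun k => match k with | Sum.inl j => Vlt j | Sum.inr j => Vgt j)
      (by rintro (j | j); exacts [h3lt j, h3gt j]) (by rintro (j | j); exacts [h4lt j, h4gt j])
      hmut U R S (fun ω => rfl) c hc
  set R := Hk * Xopt - A with hR
  set q3 : ℝ := 3 ^ (p + q') with hq3
  have hq3pos : 0 < q3 := by positivity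
  have hm1 : 8 * s ^ 2 * (2 + q3) ≤ m * δ := by
    rw [← div_le_iff₀ hδ, hm]; exact le_max_left _ _
  have hm2 : 8 * s * (2 + q3) ≤ m * (ε * δ) := by
    rw [← div_le_iff₀ (by positivity), hm]; exact le_max_right _ _
  have b1 : (μ {ω | 1 / 4 < frobSq ((S ω * U)ᵀ * (S ω * U) - Uᵀ * U)}).toReal ≤ δ / 2 := by
    refine (hcore U (1 / 4) (by norm_num)).trans ?_
    rw [hFU, div_le_iff₀ (by norm_num), div_mul_eq_mul_div, div_le_iff₀ hmpos]
    have : (r : ℝ) * r ≤ s ^ 2 := by nlinarith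
    have h2 : q3 * (r * r) ≤ q3 * s ^ 2 := mul_le_mul_of_nonneg_left this hq3pos.le
    nlinarith [sq_nonneg s]
  have b2 : (μ {ω | ε / 4 * frobSq R < frobSq ((S ω * U)ᵀ * (S ω * R) - Uᵀ * R)}).toReal
      ≤ δ / 2 := by
    rcases (frobSq_nonneg R).eq_or_lt with h0 | hpos
    · have hR0 : R = 0 := frobSq_eq_zero R h0.symm
      have : {ω | ε / 4 * frobSq R < frobSq ((S ω * U)ᵀ * (S ω * R) - Uᵀ * R)} = ∅ := by
        ext ω
        simp [hR0, frobSq]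
      rw [this]
      simp
      positivity
    · refine (hcore R (ε / 4 * frobSq R) (by positivity)).trans ?_
      rw [hFU, div_le_iff₀ (by positivity), div_mul_eq_mul_div, div_le_iff₀ hmpos]
      have h2 : q3 * r ≤ q3 * s := mul_le_mul_of_nonneg_left hr' hq3pos.le
      have h3 : q3 * r ≤ m * (ε * δ) / 8 := by nlinarith
      have h4 := mul_le_mul_of_nonneg_right h3 hpos.le
      nlinarith
  set good := {ω |
      let S := countSketch
        (hashPair (hashFam (n := fun j : Fin p => na j) (fun j => Hlt j ω))
                  (hashFam (n := fun j : Fin q' => nb j) (fun j => Hgt j ω)))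
        (fun i => (∏ j : Fin p, Vlt j ω (i.1 j)) * ∏ j : Fin q', Vgt j ω (i.2 j))
      ∀ Y : Matrix (Fin (ra p) × Fin (rb 0)) (Fin nk) ℝ,
        (∀ X,
          1 / 2 * frobSq (S * Hk * Y - S * A) +
              σ / 2 * frobSq (Y - Xt) ≤
            1 / 2 * frobSq (S * Hk * X - S * A) +
              σ / 2 * frobSq (X - Xt)) →
          1 / 2 * frobSq (Hk * Y - A) +
              σ / 2 * frobSq (Y - Xt) ≤
            (1 + ε) * (1 / 2 * frobSq R +
              σ / 2 * frobSq (Xopt - Xt))} with hgood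
  have hcover : (Set.univ : Set Ω) ⊆ good ∪
      ({ω | 1 / 4 < frobSq ((S ω * U)ᵀ * (S ω * U) - Uᵀ * U)} ∪
       {ω | ε / 4 * frobSq R < frobSq ((S ω * U)ᵀ * (S ω * R) - Uᵀ * R)}) := by
    intro ω _
    by_cases c1 : 1 / 4 < frobSq ((S ω * U)ᵀ * (S ω * U) - Uᵀ * U)
    · exact Or.inr (Or.inl c1)
    by_cases c2 : ε / 4 * frobSq R < frobSq ((S ω * U)ᵀ * (S ω * R) - Uᵀ * R)
    · exact Or.inr (Or.inr c2)
    refine Or.inl ?_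
    intro Y hY
    exact deterministic Hk U W hU hUW A Xt Xopt Y σ ε hσ hε (S ω) hXopt hY
      (not_lt.1 c1) (not_lt.1 c2)
  have h1 : (1 : ENNReal) ≤ μ good +
      (μ {ω | 1 / 4 < frobSq ((S ω * U)ᵀ * (S ω * U) - Uᵀ * U)} +
       μ {ω | ε / 4 * frobSq R < frobSq ((S ω * U)ᵀ * (S ω * R) - Uᵀ * R)}) := by
    rw [← measure_univ (μ := μ)]
    refine (measure_mono hcover).trans ((measure_union_le _ _).trans ?_)
    gcongr
    exact measure_union_le _ _
  have h2 := ENNReal.toReal_mono (by simp) h1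
  rw [ENNReal.toReal_add (measure_ne_top _ _) (by simp),
    ENNReal.toReal_add (measure_ne_top _ _) (measure_ne_top _ _), ENNReal.toReal_one] at h2
  linarith
end
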